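/- arXiv:2401.07373 — 3 statements merged into one kernel-verified Lean document; each statement's English description precedes it below -/
import Mathlib

section
/- Let M > M₁(Ω₁) and let u^ε ∈ C⁴(Ω̄^ε) be the strictly k-convex solution of problem (2.1). Then there exists a constant C > 0, depending on n and k but independent of ε, such that sup_{Ω̄^ε} |D²u^ε| ≤ C·(1 + sup_{∂Ω^ε} |D²u^ε|), where |D²u^ε| denotes the operator norm of the Hessian matrix and ∂Ω^ε = ∂Ω₁ ∪ ∂B_ε(0). -/
open Set Metric Filter Topology Bornology
open scoped RealInnerProductSpace

noncomputable section

/-- Euclidean `n`-space. -/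
abbrev Euc (n : ℕ) := EuclideanSpace ℝ (Fin n)

/-- The `k`-th elementary symmetric polynomial of a vector `lam ∈ ℝⁿ`. -/
def esymmVec {n : ℕ} (k : ℕ) (lam : Fin n → ℝ) : ℝ :=
  ∑ S ∈ Finset.powersetCard k (Finset.univ : Finset (Fin n)), ∏ i ∈ S, lam i

/-- `σ_k(A)`: the `k`-th elementary symmetric polynomial of the eigenvalues of a
symmetric matrix `A` (junk value `0` if `A` is not symmetric). -/
noncomputable def sigmaMat {n : ℕ} (k : ℕ) (A : Matrix (Fin n) (Fin n) ℝ) : ℝ := by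
  classical exact if h : A.IsHermitian then esymmVec k h.eigenvalues else 0

/-- The eigenvalues of the symmetric matrix `A` lie in the Gårding cone
`Γ_k = {λ : σ_j(λ) > 0, j = 1, …, k}`. -/
def InGardingCone {n : ℕ} (k : ℕ) (A : Matrix (Fin n) (Fin n) ℝ) : Prop :=
  ∃ h : A.IsHermitian, ∀ j : ℕ, 1 ≤ j → j ≤ k → 0 < esymmVec j h.eigenvalues

/-- The Hessian matrix of `u` at `x`, with derivatives taken within the set `s`. -/
noncomputable def hessianWithin {n : ℕ} (u : Euc n → ℝ) (s : Set (Euc n)) (x : Euc n) :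
    Matrix (Fin n) (Fin n) ℝ :=
  fun i j => iteratedFDerivWithin ℝ 2 u s x
    ![EuclideanSpace.single i (1:ℝ), EuclideanSpace.single j (1:ℝ)]

/-- The Hessian matrix `D²u(x)` of `u` at `x`. -/
noncomputable def hessian {n : ℕ} (u : Euc n → ℝ) (x : Euc n) : Matrix (Fin n) (Fin n) ℝ :=
  fun i j => iteratedFDeriv ℝ 2 u x
    ![EuclideanSpace.single i (1:ℝ), EuclideanSpace.single j (1:ℝ)]

/-- Operator norm of the Hessian matrix of `u` at `x` (derivatives within `s`). -/
noncomputable def hessOpNormWithin {n : ℕ} (u : Euc n → ℝ) (s : Set (Euc n)) (x : Euc n) : ℝ :=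
  ‖Matrix.toEuclideanCLM (𝕜 := ℝ) (hessianWithin u s x)‖

/-- A set has smooth boundary: it is the sublevel set of a smooth defining function
with nonvanishing differential on the boundary. -/
def HasSmoothBoundary {n : ℕ} (Ω : Set (Euc n)) : Prop :=
  ∃ ρ : Euc n → ℝ, ContDiff ℝ (⊤ : ℕ∞) ρ ∧ Ω = {x | ρ x < 0} ∧
    ∀ x ∈ frontier Ω, fderiv ℝ ρ x ≠ 0

/-- `c_{n,k} = (C(n,k))^{1/k}` where `C(n,k)` is the binomial coefficient. -/
noncomputable def cnk (n k : ℕ) : ℝ := (n.choose k : ℝ) ^ ((1:ℝ)/(k:ℝ))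

/-- The radially symmetric subsolution `|x - x₀|²/(2c_{n,k}) − ε²/(2c_{n,k}) − M`. -/
noncomputable def underSol {n : ℕ} (k : ℕ) (x₀ : Euc n) (ε M : ℝ) (x : Euc n) : ℝ :=
  ‖x - x₀‖^2 / (2 * cnk n k) - ε^2 / (2 * cnk n k) - M

/-- The closed ring `Ω̄^ε = closure (Ω₁ \ B̄_ε(x₀))`. -/
def ringSet {n : ℕ} (Ω₁ : Set (Euc n)) (x₀ : Euc n) (ε : ℝ) : Set (Euc n) :=
  closure (Ω₁ \ closedBall x₀ ε)

/-- `u` is a strictly `k`-convex solution of problem (2.1):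
`σ_k(D²u) = 1` in `Ω^ε = Ω₁ \ B̄_ε(x₀)`, `u = 0` on `∂Ω₁`, `u = −M` on `∂B_ε(x₀)`,
with `u ∈ C²(Ω̄^ε)`. -/
def IsSol {n : ℕ} (k : ℕ) (Ω₁ : Set (Euc n)) (x₀ : Euc n) (ε M : ℝ) (u : Euc n → ℝ) : Prop :=
  ContDiffOn ℝ 2 u (ringSet Ω₁ x₀ ε) ∧
  (∀ x ∈ Ω₁ \ closedBall x₀ ε,
      InGardingCone k (hessianWithin u (ringSet Ω₁ x₀ ε) x) ∧
      sigmaMat k (hessianWithin u (ringSet Ω₁ x₀ ε) x) = 1) ∧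
  (∀ x ∈ frontier Ω₁, u x = 0) ∧
  (∀ x ∈ sphere x₀ ε, u x = -M)

/-- `ψ` is a strictly `k`-convex solution of problem (2.2):
`σ_k(D²ψ) = 1` in `Ω₁`, `ψ = 0` on `∂Ω₁`, with `ψ ∈ C^∞(Ω̄₁)`. -/
def IsSol22 {n : ℕ} (k : ℕ) (Ω₁ : Set (Euc n)) (ψ : Euc n → ℝ) : Prop :=
  ContDiffOn ℝ (⊤ : ℕ∞) ψ (closure Ω₁) ∧
  (∀ x ∈ Ω₁, InGardingCone k (hessianWithin ψ (closure Ω₁) x) ∧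
      sigmaMat k (hessianWithin ψ (closure Ω₁) x) = 1) ∧
  (∀ x ∈ frontier Ω₁, ψ x = 0)

/-- `u` is a strictly `k`-convex solution of the Dirichlet problem on the convex ring
`Ω = Ω₁ \ Ω̄₂`: `σ_k(D²u) = 1` in `Ω`, `u = 0` on `∂Ω₁`, `u = −M` on `∂Ω₂`,
with `u ∈ C²(Ω̄)`. -/
def IsSolRing {n : ℕ} (k : ℕ) (Ω₁ Ω₂ : Set (Euc n)) (M : ℝ) (u : Euc n → ℝ) : Prop :=
  ContDiffOn ℝ 2 u (closure (Ω₁ \ closure Ω₂)) ∧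
  (∀ x ∈ Ω₁ \ closure Ω₂,
      InGardingCone k (hessianWithin u (closure (Ω₁ \ closure Ω₂)) x) ∧
      sigmaMat k (hessianWithin u (closure (Ω₁ \ closure Ω₂)) x) = 1) ∧
  (∀ x ∈ frontier Ω₁, u x = 0) ∧
  (∀ x ∈ frontier Ω₂, u x = -M)

/-- The extension `ũ` of `u`, equal to `−M` on the closed ball `B̄_ε(x₀)`. -/
noncomputable def extendBy {n : ℕ} (u : Euc n → ℝ) (x₀ : Euc n) (ε M : ℝ) (x : Euc n) : ℝ := by
  classical exact if x ∈ closedBall x₀ ε then -M else u x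

/-- The extension `ũ` of `u`, equal to `−M` on the set `Ω₂`. -/
noncomputable def extendOn {n : ℕ} (u : Euc n → ℝ) (Ω₂ : Set (Euc n)) (M : ℝ) (x : Euc n) : ℝ := by
  classical exact if x ∈ Ω₂ then -M else u x

/-- The quadratic polynomial with Hessian `A`, linear part `b` and constant term `c`. -/
noncomputable def quadPoly {n : ℕ} (A : Matrix (Fin n) (Fin n) ℝ) (b : Euc n) (c : ℝ)
    (x : Euc n) : ℝ :=
  (∑ i, ∑ j, A i j * x i * x j) / 2 + ⟪b, x⟫ + c

/-- elementary symmetric polynomial over a finset -/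
def EE {ι : Type*} [DecidableEq ι] (s : Finset ι) (k : ℕ) (x : ι → ℝ) : ℝ :=
  ∑ S ∈ Finset.powersetCard k s, ∏ i ∈ S, x i

section alg
variable {ι : Type*} [DecidableEq ι]

lemma EE_zero (s : Finset ι) (x : ι → ℝ) : EE s 0 x = 1 := by simp [EE]

lemma EE_insert {s : Finset ι} {i : ι} (hi : i ∉ s) (k : ℕ) (x : ι → ℝ) :
    EE (insert i s) (k+1) x = EE s (k+1) x + x i * EE s k x := by
  unfold EE
  rw [Finset.powersetCard_succ_insert hi, Finset.sum_union, Finset.sum_image, Finset.mul_sum]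
  · congr 1
    apply Finset.sum_congr rfl
    intro S hS
    rw [Finset.prod_insert]
    exact fun h => hi ((Finset.mem_powersetCard.1 hS).1 h)
  · intro S hS T hT h
    have h1 : i ∉ S := fun h => hi ((Finset.mem_powersetCard.1 hS).1 h)
    have h2 : i ∉ T := fun h => hi ((Finset.mem_powersetCard.1 hT).1 h)
    rw [← Finset.erase_insert h1, ← Finset.erase_insert h2]
    exact congrArg (fun A => Finset.erase A i) h
  · rw [Finset.disjoint_left]
    intro S hS hS'
    obtain ⟨T, hT, rfl⟩ := Finset.mem_image.1 hS'
    exact hi ((Finset.mem_powersetCard.1 hS).1 (Finset.mem_insert_self _ _))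

lemma EE_erase {s : Finset ι} {i : ι} (hi : i ∈ s) (k : ℕ) (x : ι → ℝ) :
    EE s (k+1) x = EE (s.erase i) (k+1) x + x i * EE (s.erase i) k x := by
  conv_lhs => rw [← Finset.insert_erase hi]
  exact EE_insert (Finset.notMem_erase i s) k x

lemma EE_empty (k : ℕ) (x : ι → ℝ) : EE (∅ : Finset ι) (k+1) x = 0 := by
  unfold EE
  rw [Finset.powersetCard_eq_empty.2 (by simp)]; simp

lemma EE_euler (s : Finset ι) (k : ℕ) (x : ι → ℝ) :
    ∑ i ∈ s, x i * EE (s.erase i) k x = (k+1) * EE s (k+1) x := by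
  induction s using Finset.induction_on generalizing k with
  | empty => simp [EE_empty]
  | insert a s ha ih =>
    rw [Finset.sum_insert ha, Finset.erase_insert ha, EE_insert ha]
    have : ∀ i ∈ s, (insert a s).erase i = insert a (s.erase i) := by
      intro i hi
      rw [Finset.erase_insert_of_ne]
      rintro rfl; exact ha hi
    rw [Finset.sum_congr rfl (fun i hi => by rw [this i hi])]
    rcases k with _ | k
    · have := ih 0
      simp only [EE_zero] at *
      push_cast at *
      linarith
    · have h1 : ∀ i ∈ s, x i * EE (insert a (s.erase i)) (k+1) x
        = x i * EE (s.erase i) (k+1) x + x a * (x i * EE (s.erase i) k x) := by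
        intro i hi
        rw [EE_insert (by simp [ha])]; ring
      rw [Finset.sum_congr rfl h1, Finset.sum_add_distrib, ← Finset.mul_sum, ih, ih]
      push_cast; ring

lemma EE_smul (s : Finset ι) (k : ℕ) (c : ℝ) (x : ι → ℝ) :
    EE s k (c • x) = c ^ k * EE s k x := by
  unfold EE
  rw [Finset.mul_sum]
  apply Finset.sum_congr rfl
  intro S hS
  simp only [Pi.smul_apply, smul_eq_mul, Finset.prod_mul_distrib, Finset.prod_const]
  rw [(Finset.mem_powersetCard.1 hS).2]

open Polynomial in
lemma splits_deriv {p : ℝ[X]} (hp : p.Splits) : (derivative p).Splits := by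
  rw [splits_iff_card_roots] at *
  apply le_antisymm (card_roots' _)
  have h1 := card_roots_le_derivative p
  have h2 := natDegree_derivative_le p
  omega

open Polynomial in
lemma splits_iter_deriv {p : ℝ[X]} (hp : p.Splits) (m : ℕ) : (derivative^[m] p).Splits := by
  induction m with
  | zero => exact hp
  | succ m ih => rw [Function.iterate_succ_apply']; exact splits_deriv ih

open Polynomial in
lemma laguerre {p : ℝ[X]} (hp : p.Splits) (t : ℝ) :
    p.eval t * (derivative (derivative p)).eval t ≤ ((derivative p).eval t)^2 := by
  rw [hp.eq_prod_roots]
  have key : ∀ m : Multiset ℝ, ((m.map (fun a => X - C a)).prod).eval t *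
      (derivative (derivative ((m.map (fun a => X - C a)).prod))).eval t ≤
      ((derivative ((m.map (fun a => X - C a)).prod)).eval t)^2 := by
    intro m
    induction m using Multiset.induction_on with
    | empty => simp
    | cons a m ih =>
      simp only [Multiset.map_cons, Multiset.prod_cons, derivative_mul, derivative_add, eval_add,
        eval_mul, derivative_sub, derivative_X, derivative_C, eval_sub, eval_X, eval_C, eval_one,
        sub_zero, derivative_one, eval_zero, zero_mul, one_mul, zero_add]
      nlinarith [mul_le_mul_of_nonneg_left ih (sq_nonneg (t - a)),
        sq_nonneg (((m.map (fun a => X - C a)).prod).eval t)]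
  have := key p.roots
  simp only [derivative_mul, derivative_C, zero_mul, zero_add, eval_mul, eval_C]
  nlinarith [mul_le_mul_of_nonneg_left this (sq_nonneg p.leadingCoeff)]

open Polynomial in
lemma coeff_gen (s : Finset ι) (x : ι → ℝ) (k : ℕ) :
    (∏ i ∈ s, (C (x i) * X + 1)).coeff k = EE s k x := by
  induction s using Finset.induction_on generalizing k with
  | empty =>
    rcases k with _ | k
    · simp [EE_zero]
    · simp [EE_empty, coeff_one]
  | insert a s ha ih =>
    rw [Finset.prod_insert ha, add_mul, one_mul, mul_assoc, coeff_add, coeff_C_mul]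
    rcases k with _ | k
    · simp [ih, EE_zero]
    · rw [coeff_X_mul, ih, ih, EE_insert ha]; ring

open Polynomial in
lemma newton (s : Finset ι) (x : ι → ℝ) (k : ℕ)
    (h0 : 0 < EE s k x) (h2 : 0 < EE s (k+2) x) :
    EE s k x * EE s (k+2) x ≤ (EE s (k+1) x)^2 := by
  have hp : (∏ i ∈ s, (C (x i) * X + 1)).Splits := by
    apply Splits.prod
    intro i hi
    exact Splits.of_natDegree_le_one (by compute_degree)
  have h := laguerre (splits_iter_deriv hp k) 0
  rw [← Function.iterate_succ_apply' derivative, ← Function.iterate_succ_apply' derivative,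
    ← coeff_zero_eq_eval_zero, ← coeff_zero_eq_eval_zero, ← coeff_zero_eq_eval_zero,
    coeff_iterate_derivative, coeff_iterate_derivative, coeff_iterate_derivative,
    zero_add, zero_add, zero_add, coeff_gen, coeff_gen, coeff_gen,
    Nat.descFactorial_self, Nat.descFactorial_self, Nat.descFactorial_self] at h
  simp only [nsmul_eq_mul] at h
  rw [Nat.succ_eq_add_one, Nat.succ_eq_add_one, Nat.factorial_succ (k+1), Nat.factorial_succ k] at h
  push_cast at h
  have hf : (0:ℝ) < (k.factorial : ℝ) := by exact_mod_cast k.factorial_pos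
  have hk : (0:ℝ) ≤ k := Nat.cast_nonneg k
  set f : ℝ := (k.factorial : ℝ)
  have hP := mul_pos h0 h2
  have h' : (f^2*(k+1)) * ((k+2) * (EE s k x * EE s (k+2) x)) ≤
      (f^2*(k+1)) * ((k+1) * EE s (k+1) x ^2) := by
    nlinarith [h]
  have h'' := le_of_mul_le_mul_left h' (by positivity)
  have : ((k:ℝ)+1) * (EE s k x * EE s (k+2) x) ≤ (k+1) * EE s (k+1) x ^2 := by nlinarith
  exact le_of_mul_le_mul_left this (by positivity)

/-- Garding cone over a finset -/
def GC (k : ℕ) (s : Finset ι) (x : ι → ℝ) : Prop := ∀ j ≤ k, 0 < EE s j x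

lemma GC_erase {k : ℕ} {s : Finset ι} {x : ι → ℝ} (h : GC (k+1) s x) {i : ι} (hi : i ∈ s) :
    GC k (s.erase i) x := by
  intro j
  induction j with
  | zero => intro _; simp [EE_zero]
  | succ j ih =>
    intro hj
    have h0 := ih (by omega)
    by_contra hneg
    push Not at hneg
    have h1 := h (j+1) (by omega)
    have h2 := h (j+2) (by omega)
    rw [EE_erase hi] at h1 h2
    have hx : 0 < x i := by
      by_contra hx
      push Not at hx
      nlinarith
    have h3 : 0 < EE (s.erase i) (j+2) x := by nlinarith
    have hN := newton (s.erase i) x j h0 h3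
    nlinarith

lemma fsuper {x y p q : ℝ} (h1 : 0 < x + p) (h2 : 0 < y + q) {r : ℝ} (hr : p + q ≤ r) :
    x * p / (x + p) + y * q / (y + q) ≤ (x + y) * r / (x + y + r) := by
  have h3 : 0 < x + y + r := by linarith
  rw [div_add_div _ _ h1.ne' h2.ne', div_le_div_iff₀ (by positivity) h3]
  have h4 : (x * p * (y + q) + (x + p) * (y * q)) * (x + y + (p + q)) ≤
     (x + y) * (p + q) * ((x + p) * (y + q)) := by
    nlinarith [sq_nonneg (x * q - y * p)]
  obtain ⟨d, hd, rfl⟩ : ∃ d, 0 ≤ d ∧ r = p + q + d := ⟨r - (p+q), by linarith, by ring⟩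
  have h6 : (x * p * (y + q) + (x + p) * (y * q)) ≤ (x + y) * ((x + p) * (y + q)) := by
    nlinarith [mul_nonneg h2.le (sq_nonneg x), mul_nonneg h1.le (sq_nonneg y)]
  nlinarith [mul_le_mul_of_nonneg_left h6 hd]

lemma qformula {s : Finset ι} {x : ι → ℝ} {k : ℕ} (h : GC (k+1) s x)
    (h' : ∀ i ∈ s, GC k (s.erase i) x) :
    (k+2) * (EE s (k+2) x / EE s (k+1) x) =
      ∑ i ∈ s, x i * (EE (s.erase i) (k+1) x / EE (s.erase i) k x) /
        (x i + EE (s.erase i) (k+1) x / EE (s.erase i) k x) := by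
  have he := EE_euler s (k+1) x
  push_cast at he
  have : ((k:ℝ)+2) * (EE s (k+2) x / EE s (k+1) x) =
    ((k:ℝ)+1+1) * EE s (k+2) x / EE s (k+1) x := by ring
  rw [this, ← he, Finset.sum_div]
  apply Finset.sum_congr rfl
  intro i hi
  have h0 := h' i hi k le_rfl
  have h1 := h (k+1) le_rfl
  have e := EE_erase hi k x
  have : x i + EE (s.erase i) (k+1) x / EE (s.erase i) k x = EE s (k+1) x / EE (s.erase i) k x := by
    rw [e]; field_simp; ring
  rw [this]
  field_simp

lemma denpos {i : ι} {s : Finset ι} {x : ι → ℝ} {k : ℕ} (h : GC (k+1) s x)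
    (h' : GC k (s.erase i) x) (hi : i ∈ s) :
    0 < x i + EE (s.erase i) (k+1) x / EE (s.erase i) k x := by
  have h0 := h' k le_rfl
  have h1 := h (k+1) le_rfl
  have e := EE_erase hi k x
  have : x i + EE (s.erase i) (k+1) x / EE (s.erase i) k x = EE s (k+1) x / EE (s.erase i) k x := by
    rw [e]; field_simp; ring
  rw [this]; positivity

lemma EE_one (s : Finset ι) (x : ι → ℝ) : EE s 1 x = ∑ i ∈ s, x i := by
  have := EE_euler s 0 x
  simpa [EE_zero] using this.symm

theorem marcus_lopes (k : ℕ) : ∀ (s : Finset ι) (x y : ι → ℝ), GC k s x → GC k s y →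
    GC k s (x + y) ∧ ∀ j, j + 1 ≤ k → EE s (j+1) x / EE s j x + EE s (j+1) y / EE s j y ≤
      EE s (j+1) (x+y) / EE s j (x+y) := by
  induction k with
  | zero =>
    intro s x y _ _
    refine ⟨fun j hj => ?_, fun j hj => by omega⟩
    obtain rfl : j = 0 := by omega
    simp [EE_zero]
  | succ k ih =>
    intro s x y hx hy
    have hx' : GC k s x := fun j hj => hx j (by omega)
    have hy' : GC k s y := fun j hj => hy j (by omega)
    obtain ⟨hg, hq⟩ := ih s x y hx' hy'
    have key : EE s (k+1) x / EE s k x + EE s (k+1) y / EE s k y ≤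
      EE s (k+1) (x+y) / EE s k (x+y) := by
      rcases k with _ | k
      · simp [EE_zero, EE_one, Finset.sum_add_distrib]
      · have hxe : ∀ i ∈ s, GC (k+1) (s.erase i) x := fun i hi => GC_erase hx hi
        have hye : ∀ i ∈ s, GC (k+1) (s.erase i) y := fun i hi => GC_erase hy hi
        have hze := fun i hi => ih (s.erase i) x y (hxe i hi) (hye i hi)
        have m : ∀ {z}, (∀ i ∈ s, GC (k+1) (s.erase i) z) → (∀ i ∈ s, GC k (s.erase i) z) :=
          fun h i hi j hj => h i hi j (by omega)
        have f1 := qformula hx' (m hxe)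
        have f2 := qformula hy' (m hye)
        have f3 := qformula hg (m (fun i hi => (hze i hi).1))
        have hs : ((k:ℝ)+2) * (EE s (k+2) x / EE s (k+1) x + EE s (k+2) y / EE s (k+1) y) ≤
          ((k:ℝ)+2) * (EE s (k+2) (x+y) / EE s (k+1) (x+y)) := by
          rw [mul_add, f1, f2, f3, ← Finset.sum_add_distrib]
          apply Finset.sum_le_sum
          intro i hi
          exact fsuper (denpos hx' (m hxe i hi) hi) (denpos hy' (m hye i hi) hi)
            ((hze i hi).2 k le_rfl)
        exact le_of_mul_le_mul_left hs (by positivity)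
    constructor
    · intro j hj
      rcases Nat.lt_or_ge j (k+1) with h | h
      · exact hg j (by omega)
      · obtain rfl : j = k+1 := by omega
        have a := div_pos (hx (k+1) le_rfl) (hx' k le_rfl)
        have b := div_pos (hy (k+1) le_rfl) (hy' k le_rfl)
        have c : 0 < EE s (k+1) (x+y) / EE s k (x+y) := by linarith
        exact (div_pos_iff_of_pos_right (hg k le_rfl)).1 c
    · intro j hj
      rcases Nat.lt_or_ge j k with h | h
      · exact hq j (by omega)
      · obtain rfl : j = k := by omega
        exact key

lemma GC_smul {k : ℕ} {s : Finset ι} {x : ι → ℝ} (h : GC k s x) {c : ℝ} (hc : 0 < c) :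
    GC k s (c • x) := by
  intro j hj
  rw [EE_smul]
  exact mul_pos (pow_pos hc _) (h j hj)

/-- superlevel set -/
def SL (k : ℕ) (s : Finset ι) : Set (ι → ℝ) := {x | GC k s x ∧ 1 ≤ EE s k x}

lemma geo {k : ℕ} {s : Finset ι} {x y : ι → ℝ} (hx : GC k s x) (hy : GC k s y) {a b : ℝ}
    (ha : 0 < a) (hb : 0 < b) (hab : a + b = 1) :
    EE s k x ^ a * EE s k y ^ b ≤ EE s k (a • x + b • y) := by
  obtain ⟨hg, hq⟩ := marcus_lopes k s _ _ (GC_smul hx ha) (GC_smul hy hb)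
  have : ∀ j ≤ k, EE s j x ^ a * EE s j y ^ b ≤ EE s j (a • x + b • y) := by
    intro j
    induction j with
    | zero => intro _; simp [EE_zero]
    | succ j ih =>
      intro hj
      have h1 := ih (by omega)
      have h2 := hq j hj
      rw [EE_smul, EE_smul, EE_smul, EE_smul] at h2
      have x0 := hx j (by omega)
      have x1 := hx (j+1) (by omega)
      have y0 := hy j (by omega)
      have y1 := hy (j+1) (by omega)
      have z0 := hg j (by omega)
      have e1 : a^(j+1) * EE s (j+1) x / (a^j * EE s j x) = a * (EE s (j+1) x / EE s j x) := by
        rw [pow_succ]; field_simp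
      have e2 : b^(j+1) * EE s (j+1) y / (b^j * EE s j y) = b * (EE s (j+1) y / EE s j y) := by
        rw [pow_succ]; field_simp
      rw [e1, e2] at h2
      have h3 := Real.geom_mean_le_arith_mean2_weighted ha.le hb.le (div_pos x1 x0).le
        (div_pos y1 y0).le hab
      have h4 := h3.trans h2
      rw [Real.div_rpow x1.le x0.le, Real.div_rpow y1.le y0.le] at h4
      have h5 := mul_le_mul h4 h1 (by positivity) (by
        exact le_trans (by positivity) h4)
      have hx0 : 0 < EE s j x ^ a := by positivity
      have hy0 : 0 < EE s j y ^ b := by positivity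
      have e3 : EE s (j+1) x ^ a / EE s j x ^ a * (EE s (j+1) y ^ b / EE s j y ^ b) *
        (EE s j x ^ a * EE s j y ^ b) = EE s (j+1) x ^ a * EE s (j+1) y ^ b := by
        field_simp
      rw [e3, div_mul_cancel₀ _ z0.ne'] at h5
      exact h5
  exact this k le_rfl

lemma SL_convex (k : ℕ) (s : Finset ι) : Convex ℝ (SL k s) := by
  rw [convex_iff_forall_pos]
  intro x hx y hy a b ha hb hab
  refine ⟨(marcus_lopes k s _ _ (GC_smul hx.1 ha) (GC_smul hy.1 hb)).1, ?_⟩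
  refine le_trans ?_ (geo hx.1 hy.1 ha hb hab)
  exact one_le_mul_of_one_le_of_one_le (Real.one_le_rpow hx.2 ha.le) (Real.one_le_rpow hy.2 hb.le)

lemma EE_hasDeriv (s : Finset ι) (k : ℕ) (x v : ι → ℝ) :
    HasDerivAt (fun t : ℝ => EE s (k+1) (x + t • v)) (∑ i ∈ s, v i * EE (s.erase i) k x) 0 := by
  induction s using Finset.induction_on generalizing k with
  | empty => simpa [EE_empty] using hasDerivAt_const (0:ℝ) (0:ℝ)
  | insert a s ha ih =>
    have hfun : (fun t : ℝ => EE (insert a s) (k+1) (x + t • v)) =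
      fun t : ℝ => EE s (k+1) (x + t • v) + (x a + t * v a) * EE s k (x + t • v) := by
      ext t; rw [EE_insert ha]; simp
    rw [hfun, Finset.sum_insert ha, Finset.erase_insert ha]
    have hl : HasDerivAt (fun t : ℝ => x a + t * v a) (v a) 0 := by
      simpa using ((hasDerivAt_id (0:ℝ)).mul_const (v a)).const_add (x a)
    have : ∀ i ∈ s, (insert a s).erase i = insert a (s.erase i) := by
      intro i hi
      rw [Finset.erase_insert_of_ne]
      rintro rfl; exact ha hi
    rw [Finset.sum_congr rfl (fun i hi => by rw [this i hi])]
    rcases k with _ | k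
    · simp only [EE_zero, mul_one] at *
      have := (ih 0).add hl
      simp only [EE_zero, mul_one] at this
      exact this.congr_deriv (add_comm _ _)
    · have h1 : ∀ i ∈ s, v i * EE (insert a (s.erase i)) (k+1) x
        = v i * EE (s.erase i) (k+1) x + x a * (v i * EE (s.erase i) k x) := by
        intro i hi
        rw [EE_insert (by simp [ha])]; ring
      rw [Finset.sum_congr rfl h1, Finset.sum_add_distrib, ← Finset.mul_sum]
      refine HasDerivAt.congr_deriv ((ih (k+1)).add (hl.mul (ih k))) ?_
      simp only [zero_smul, add_zero, zero_mul]
      ring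

/-- supporting hyperplane -/
lemma support {k : ℕ} {s : Finset ι} {x y : ι → ℝ} (hx : GC (k+1) s x) (h1 : EE s (k+1) x = 1)
    (hy : y ∈ SL (k+1) s) : 0 ≤ ∑ i ∈ s, EE (s.erase i) k x * (y i - x i) := by
  have hd := EE_hasDeriv s k x (y - x)
  have hs : ∑ i ∈ s, (y - x) i * EE (s.erase i) k x = ∑ i ∈ s, EE (s.erase i) k x * (y i - x i) :=
    Finset.sum_congr rfl (fun i _ => by simp [mul_comm])
  rw [hs] at hd
  refine ge_of_tendsto hd.tendsto_slope_zero_right ?_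
  have : Ioo (0:ℝ) 1 ∈ 𝓝[>] (0:ℝ) := Ioo_mem_nhdsGT one_pos
  filter_upwards [this] with t ht
  have hc := (SL_convex (k+1) s) (show x ∈ SL (k+1) s from ⟨hx, h1.ge⟩) hy
    (show 0 ≤ 1 - t by linarith [ht.2]) ht.1.le (by ring)
  have e : (1 - t) • x + t • y = x + t • (y - x) := by
    ext i; simp; ring
  rw [e] at hc
  simp only [zero_add, zero_smul, add_zero, h1, smul_eq_mul]
  exact mul_nonneg (inv_nonneg.2 ht.1.le) (by linarith [hc.2])

end alg

section mat
variable {n : ℕ}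

lemma EE_perm (k : ℕ) (x : Fin n → ℝ) (σ : Equiv.Perm (Fin n)) :
    EE Finset.univ k (x ∘ σ) = EE Finset.univ k x := by
  unfold EE
  have h := Finset.powersetCard_map (σ.toEmbedding) k (Finset.univ : Finset (Fin n))
  rw [Finset.map_univ_equiv] at h
  conv_rhs => rw [h]
  rw [Finset.sum_map]
  apply Finset.sum_congr rfl
  intro S _
  simp [Finset.mapEmbedding_apply]

lemma clm_spec {B : Matrix (Fin n) (Fin n) ℝ} (h : B.IsHermitian) (v : Euc n) :
    Matrix.toEuclideanCLM (𝕜 := ℝ) B v =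
      ∑ m, (h.eigenvalues m * ⟪h.eigenvectorBasis m, v⟫) • h.eigenvectorBasis m := by
  have he : ∀ m, Matrix.toEuclideanCLM (𝕜 := ℝ) B (h.eigenvectorBasis m) =
      h.eigenvalues m • h.eigenvectorBasis m := by
    intro m
    have := h.mulVec_eigenvectorBasis m
    apply (WithLp.ofLp_injective 2)
    rw [Matrix.ofLp_toEuclideanCLM, this]
    rfl
  conv_lhs => rw [← h.eigenvectorBasis.sum_repr' v, map_sum]
  apply Finset.sum_congr rfl
  intro m _
  rw [map_smul, he, smul_smul, mul_comm]

lemma quad_spec {B : Matrix (Fin n) (Fin n) ℝ} (h : B.IsHermitian) (v : Euc n) :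
    ⟪v, Matrix.toEuclideanCLM (𝕜 := ℝ) B v⟫ =
      ∑ m, ⟪h.eigenvectorBasis m, v⟫ ^ 2 * h.eigenvalues m := by
  rw [clm_spec h, inner_sum]
  apply Finset.sum_congr rfl
  intro m _
  rw [inner_smul_right, real_inner_comm]
  ring

lemma diag_mem {k : ℕ} {B : Matrix (Fin n) (Fin n) ℝ} (h : B.IsHermitian)
    (hB : h.eigenvalues ∈ SL k Finset.univ) (v : OrthonormalBasis (Fin n) ℝ (Euc n)) :
    (fun l => ⟪v l, Matrix.toEuclideanCLM (𝕜 := ℝ) B (v l)⟫) ∈ SL k Finset.univ := by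
  let D : Matrix (Fin n) (Fin n) ℝ := fun l m => ⟪h.eigenvectorBasis m, v l⟫ ^ 2
  have hD : D ∈ doublyStochastic ℝ (Fin n) := by
    rw [mem_doublyStochastic_iff_sum]
    refine ⟨fun i j => sq_nonneg _, fun i => ?_, fun j => ?_⟩
    · have := h.eigenvectorBasis.sum_sq_norm_inner_right (v i)
      simpa [D, v.orthonormal.1 i] using this
    · have := v.sum_sq_norm_inner_left (h.eigenvectorBasis j)
      simpa [D, h.eigenvectorBasis.orthonormal.1 j] using this
  have e : (fun l => ⟪v l, Matrix.toEuclideanCLM (𝕜 := ℝ) B (v l)⟫) = D.mulVec h.eigenvalues := by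
    ext l
    rw [quad_spec h]; rfl
  rw [e]
  rw [← SetLike.mem_coe, doublyStochastic_eq_convexHull_permMatrix] at hD
  have hc : Convex ℝ {D : Matrix (Fin n) (Fin n) ℝ | D.mulVec h.eigenvalues ∈ SL k Finset.univ} := by
    intro D1 h1 D2 h2 a b ha hb hab
    simp only [mem_setOf_eq, Matrix.add_mulVec, Matrix.smul_mulVec] at *
    exact SL_convex k _ h1 h2 ha hb hab
  refine convexHull_min ?_ hc hD
  rintro _ ⟨σ, rfl⟩
  simp only [mem_setOf_eq, Matrix.permMatrix_mulVec]
  refine ⟨fun j hj => ?_, ?_⟩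
  · rw [EE_perm]; exact hB.1 j hj
  · rw [EE_perm]; exact hB.2

lemma norm_bound {B : Matrix (Fin n) (Fin n) ℝ} (h : B.IsHermitian) (htr : 0 < ∑ i, h.eigenvalues i)
    {K : ℝ} (hK : ∀ v : Euc n, ‖v‖ = 1 → ⟪v, Matrix.toEuclideanCLM (𝕜 := ℝ) B v⟫ ≤ K) :
    ‖Matrix.toEuclideanCLM (𝕜 := ℝ) B‖ ≤ (n:ℝ)^2 * K := by
  have h1 : ∀ i, h.eigenvalues i ≤ K := by
    intro i
    have := hK (h.eigenvectorBasis i) (h.eigenvectorBasis.orthonormal.1 i)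
    rw [quad_spec h] at this
    rw [Finset.sum_eq_single i] at this
    · simpa [h.eigenvectorBasis.orthonormal.1 i] using this
    · intro j _ hj
      rw [h.eigenvectorBasis.orthonormal.2 hj]; simp
    · simp
  have hs : ∑ i, h.eigenvalues i ≤ n * K := by
    have := Finset.sum_le_sum (fun i (_ : i ∈ Finset.univ) => h1 i)
    simpa using this
  have hK0 : 0 < K := by
    by_contra hk
    push Not at hk
    have : (n:ℝ) * K ≤ 0 := mul_nonpos_of_nonneg_of_nonpos (Nat.cast_nonneg n) hk
    linarith
  have h2 : ∀ i, |h.eigenvalues i| ≤ n * K := by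
    intro i
    have hn : (1:ℝ) ≤ n := by exact_mod_cast (Fin.pos i)
    rw [abs_le]
    constructor
    · have e := Finset.add_sum_erase Finset.univ h.eigenvalues (Finset.mem_univ i)
      have h3 : ∑ j ∈ Finset.univ.erase i, h.eigenvalues j ≤ ((n:ℝ) - 1) * K := by
        have := Finset.sum_le_sum (fun j (_ : j ∈ Finset.univ.erase i) => h1 j)
        rw [Finset.sum_const, Finset.card_erase_of_mem (Finset.mem_univ i), Finset.card_univ,
          Fintype.card_fin, nsmul_eq_mul, Nat.cast_sub (Fin.pos i)] at this
        simpa using this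
      nlinarith
    · nlinarith [h1 i]
  apply ContinuousLinearMap.opNorm_le_bound _ (by positivity)
  intro v
  rw [clm_spec h]
  refine (norm_sum_le _ _).trans ?_
  have : ∀ m ∈ Finset.univ, ‖(h.eigenvalues m * ⟪h.eigenvectorBasis m, v⟫) • h.eigenvectorBasis m‖
      ≤ n * K * ‖v‖ := by
    intro m _
    rw [norm_smul, h.eigenvectorBasis.orthonormal.1 m, mul_one, norm_mul]
    have := norm_inner_le_norm (𝕜 := ℝ) (h.eigenvectorBasis m) v
    rw [h.eigenvectorBasis.orthonormal.1 m, one_mul] at this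
    exact mul_le_mul (h2 m) this (norm_nonneg _) (by positivity)
  refine (Finset.sum_le_sum this).trans ?_
  simp
  apply le_of_eq; ring

lemma hess_quad (u : Euc n → ℝ) (s : Set (Euc n)) (x a b : Euc n) :
    ⟪a, Matrix.toEuclideanCLM (𝕜 := ℝ) (hessianWithin u s x) b⟫ =
      iteratedFDerivWithin ℝ 2 u s x ![a, b] := by
  have ea : ∀ a : Euc n, a = ∑ i, a i • EuclideanSpace.single i (1:ℝ) := by
    intro a
    ext j
    simp [Pi.single_apply]
  set L := iteratedFDerivWithin ℝ 2 u s x with hL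
  have u0 : ∀ a b c : Euc n, Function.update ![a, b] 0 c = ![c, b] := by
    intro a b c; ext i : 1; fin_cases i <;> simp
  have u1 : ∀ a b c : Euc n, Function.update ![a, b] 1 c = ![a, c] := by
    intro a b c; ext i : 1; fin_cases i <;> simp
  have e1 : ∀ b, L ![a, b] = ∑ i, a i * L ![EuclideanSpace.single i (1:ℝ), b] := by
    intro b
    have := map_sum (L.toMultilinearMap.toLinearMap ![a, b] 0) (fun i => a i • EuclideanSpace.single i (1:ℝ)) Finset.univ
    rw [← ea a] at this
    simpa [MultilinearMap.toLinearMap, u0, u1] using this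
  have e2 : ∀ c, L ![c, b] = ∑ j, b j * L ![c, EuclideanSpace.single j (1:ℝ)] := by
    intro c
    have := map_sum (L.toMultilinearMap.toLinearMap ![c, b] 1) (fun i => b i • EuclideanSpace.single i (1:ℝ)) Finset.univ
    rw [← ea b] at this
    simpa [MultilinearMap.toLinearMap, u0, u1] using this
  rw [e1]
  simp only [PiLp.inner_apply, Matrix.ofLp_toEuclideanCLM, Matrix.mulVec, dotProduct]
  apply Finset.sum_congr rfl
  intro i _
  rw [e2]
  simp only [hessianWithin, ← hL]
  simp [mul_comm]

end mat

section ana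
variable {n : ℕ}

/-- directional derivative -/
def dd (a : Euc n) (f : Euc n → ℝ) (x : Euc n) : ℝ := fderiv ℝ f x a

lemma dd_contDiffOn {U : Set (Euc n)} (hU : IsOpen U) {f : Euc n → ℝ} {m : ℕ}
    (hf : ContDiffOn ℝ (m+1 : ℕ) f U) (a : Euc n) : ContDiffOn ℝ m (dd a f) U := by
  have h : ContDiffOn ℝ m (fderiv ℝ f) U :=
    hf.fderiv_of_isOpen hU (by push_cast; exact le_rfl)
  exact h.clm_apply contDiffOn_const

lemma dd_congr {U : Set (Euc n)} (hU : IsOpen U) {f g : Euc n → ℝ} (h : EqOn f g U) (a : Euc n) :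
    EqOn (dd a f) (dd a g) U := by
  intro x hx
  have : f =ᶠ[𝓝 x] g := Filter.eventuallyEq_of_mem (hU.mem_nhds hx) h
  simp only [dd, this.fderiv_eq]

lemma dd_dd {U : Set (Euc n)} (hU : IsOpen U) {f : Euc n → ℝ}
    (hf : ContDiffOn ℝ (2:ℕ) f U) {x : Euc n} (hx : x ∈ U) (a b : Euc n) :
    dd a (dd b f) x = fderiv ℝ (fderiv ℝ f) x a b := by
  have h : ContDiffOn ℝ 1 (fderiv ℝ f) U := hf.fderiv_of_isOpen hU (by norm_num)
  have hd : DifferentiableAt ℝ (fderiv ℝ f) x :=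
    (h.differentiableOn (by norm_num)).differentiableAt (hU.mem_nhds hx)
  unfold dd
  rw [fderiv_clm_apply hd (differentiableAt_const b)]
  simp

lemma dd_comm {U : Set (Euc n)} (hU : IsOpen U) {f : Euc n → ℝ}
    (hf : ContDiffOn ℝ (2:ℕ) f U) (a b : Euc n) :
    EqOn (dd a (dd b f)) (dd b (dd a f)) U := by
  intro x hx
  rw [dd_dd hU hf hx, dd_dd hU hf hx]
  exact ((hf.contDiffAt (hU.mem_nhds hx)).isSymmSndFDerivAt (by simp)) a b

lemma dd_comm3 {U : Set (Euc n)} (hU : IsOpen U) {f : Euc n → ℝ}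
    (hf : ContDiffOn ℝ (3:ℕ) f U) (e ξ : Euc n) :
    EqOn (dd e (dd ξ (dd ξ f))) (dd ξ (dd ξ (dd e f))) U :=
  (dd_comm hU (dd_contDiffOn hU hf ξ) e ξ).trans
    (dd_congr hU (dd_comm hU (hf.of_le (by norm_num)) e ξ) ξ)

lemma dd_comm4 {U : Set (Euc n)} (hU : IsOpen U) {f : Euc n → ℝ}
    (hf : ContDiffOn ℝ (4:ℕ) f U) (e ξ : Euc n) :
    EqOn (dd e (dd e (dd ξ (dd ξ f)))) (dd ξ (dd ξ (dd e (dd e f)))) U :=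
  (dd_congr hU (dd_comm3 hU (hf.of_le (by norm_num)) e ξ) e).trans
    (dd_comm3 hU (dd_contDiffOn hU hf e) e ξ)

lemma test1 {g g1 : ℝ → ℝ} {c : ℝ} (h1 : ∀ᶠ t in 𝓝 (0:ℝ), HasDerivAt g (g1 t) t)
    (h2 : HasDerivAt g1 c 0) (hm : IsLocalMax g 0) : c ≤ 0 := by
  by_contra hc
  push Not at hc
  have e1 : deriv g =ᶠ[𝓝 0] g1 := h1.mono (fun t ht => ht.deriv)
  have e2 : deriv (deriv g) 0 = c := by rw [e1.deriv_eq, h2.deriv]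
  have hmin : IsLocalMin g 0 := isLocalMin_of_deriv_deriv_pos (by rw [e2]; exact hc)
    hm.deriv_eq_zero h1.self_of_nhds.continuousAt
  have e3 : g =ᶠ[𝓝 0] fun _ => g 0 := by
    filter_upwards [hm, hmin] with t a b
    exact le_antisymm a b
  have e4 : deriv g =ᶠ[𝓝 0] fun _ => 0 := by
    have := e3.deriv
    simpa using this
  rw [e4.deriv_eq] at e2
  simp at e2
  linarith

lemma line_hasDeriv {U : Set (Euc n)} (hU : IsOpen U) {f : Euc n → ℝ}
    (hf : ContDiffOn ℝ (1:ℕ) f U) (x e : Euc n) {t : ℝ} (hx : x + t • e ∈ U) :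
    HasDerivAt (fun t : ℝ => f (x + t • e)) (dd e f (x + t • e)) t := by
  have hd : DifferentiableAt ℝ f (x + t • e) :=
    (hf.differentiableOn (by norm_num)).differentiableAt (hU.mem_nhds hx)
  have hl : HasDerivAt (fun t : ℝ => x + t • e) e t := by
    simpa using ((hasDerivAt_id t).smul_const e).const_add x
  exact hd.hasFDerivAt.comp_hasDerivAt t hl

lemma line_mem {U : Set (Euc n)} (hU : IsOpen U) {x : Euc n} (hx : x ∈ U) (e : Euc n) :
    ∀ᶠ t in 𝓝 (0:ℝ), x + t • e ∈ U := by
  have hc : Continuous (fun t : ℝ => x + t • e) := by fun_prop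
  exact hc.continuousAt.preimage_mem_nhds (by simpa using hU.mem_nhds hx)

lemma line_hasDeriv0 {U : Set (Euc n)} (hU : IsOpen U) {f : Euc n → ℝ}
    (hf : ContDiffOn ℝ (1:ℕ) f U) {x : Euc n} (e : Euc n) (hx : x ∈ U) :
    HasDerivAt (fun t : ℝ => f (x + t • e)) (dd e f x) 0 := by
  have := line_hasDeriv hU hf x e (t := 0) (by simpa using hx)
  simpa using this

lemma no_interior_max {U : Set (Euc n)} (hU : IsOpen U) {u : Euc n → ℝ}
    (hu : ContDiffOn ℝ (4:ℕ) u U) {δ : ℝ} (hδ : 0 < δ) (ξ : Euc n) {x : Euc n} (hx : x ∈ U)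
    (v : OrthonormalBasis (Fin n) ℝ (Euc n)) (hn : 0 < n) (c : Fin n → ℝ) (hc : ∀ i, 0 < c i)
    (hmin : ∀ y ∈ U, ∑ l, c l * dd (v l) (dd (v l) u) x ≤ ∑ l, c l * dd (v l) (dd (v l) u) y)
    (hmax : ∀ y ∈ U, dd ξ (dd ξ u) y + δ * ‖y‖^2 ≤ dd ξ (dd ξ u) x + δ * ‖x‖^2) : False := by
  have C2 : ∀ a, ContDiffOn ℝ (2:ℕ) (dd a (dd a u)) U :=
    fun a => dd_contDiffOn hU (dd_contDiffOn hU hu a) a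
  have C1 : ∀ a b, ContDiffOn ℝ (1:ℕ) (dd b (dd a (dd a u))) U :=
    fun a b => dd_contDiffOn hU (C2 a) b
  have h1 : ∀ l, dd (v l) (dd (v l) (dd ξ (dd ξ u))) x + 2 * δ ≤ 0 := by
    intro l
    have hv : ‖v l‖ = 1 := v.orthonormal.1 l
    refine test1 (g := fun t => dd ξ (dd ξ u) (x + t • v l) + (2 * δ * ⟪x, v l⟫ * t + δ * t^2))
      (g1 := fun t => dd (v l) (dd ξ (dd ξ u)) (x + t • v l) + (2 * δ * ⟪x, v l⟫ + 2 * δ * t)) ?_ ?_ ?_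
    · filter_upwards [line_mem hU hx (v l)] with t ht
      refine (line_hasDeriv hU ((C2 ξ).of_le (by norm_num)) x (v l) ht).add ?_
      refine HasDerivAt.congr_deriv (((hasDerivAt_id t).const_mul _).add
        ((hasDerivAt_pow 2 t).const_mul δ)) ?_
      norm_num
      ring
    · refine (line_hasDeriv0 hU (C1 ξ (v l)) (v l) hx).add ?_
      simpa using ((hasDerivAt_id (0:ℝ)).const_mul (2*δ)).const_add (2 * δ * ⟪x, v l⟫)
    · filter_upwards [line_mem hU hx (v l)] with t ht
      have := hmax _ ht
      rw [norm_add_sq_real, norm_smul, hv, inner_smul_right] at this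
      simp only [zero_smul, add_zero, mul_one, Real.norm_eq_abs, sq_abs] at *
      nlinarith
  have h2 : -(∑ l, c l * dd ξ (dd ξ (dd (v l) (dd (v l) u))) x) ≤ 0 := by
    refine test1 (g := fun t => -(∑ l, c l * dd (v l) (dd (v l) u) (x + t • ξ)))
      (g1 := fun t => -(∑ l, c l * dd ξ (dd (v l) (dd (v l) u)) (x + t • ξ))) ?_ ?_ ?_
    · filter_upwards [line_mem hU hx ξ] with t ht
      exact (HasDerivAt.fun_sum (fun l _ =>
        (line_hasDeriv hU ((C2 (v l)).of_le (by norm_num)) x ξ ht).const_mul (c l))).neg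
    · exact (HasDerivAt.fun_sum (fun l _ =>
        (line_hasDeriv0 hU (C1 (v l) ξ) ξ hx).const_mul (c l))).neg
    · filter_upwards [line_mem hU hx ξ] with t ht
      have := hmin _ ht
      simpa using this
  have h3 : ∑ l, c l * dd ξ (dd ξ (dd (v l) (dd (v l) u))) x < 0 := by
    have : Nonempty (Fin n) := ⟨⟨0, hn⟩⟩
    apply Finset.sum_neg
    · intro l _
      rw [← dd_comm4 hU hu (v l) ξ hx]
      exact mul_neg_of_pos_of_neg (hc l) (by linarith [h1 l])
    · exact Finset.univ_nonempty
  linarith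

end ana

section fin
variable {n : ℕ}

lemma ring_uniqueDiff {Ω : Set (Euc n)} (hn : 0 < n) (hO : IsOpen Ω) (hC : Convex ℝ Ω) {ε₀ ε : ℝ}
    (hε : ε ∈ Ioo (0:ℝ) ε₀) (hsub : closedBall (0 : Euc n) ε₀ ⊆ Ω) :
    UniqueDiffOn ℝ (ringSet Ω (0 : Euc n) ε) := by
  have : Nonempty (Fin n) := ⟨⟨0, hn⟩⟩
  have key : closure Ω ∩ (closedBall (0 : Euc n) ε)ᶜ ⊆ ringSet Ω 0 ε := by
    intro y hy
    exact IsOpen.closure_inter (isOpen_compl_iff.2 isClosed_closedBall) hy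
  intro x hx
  have hxc : x ∈ closure Ω := closure_mono sdiff_subset hx
  have hxε : ε ≤ ‖x‖ := by
    have : x ∈ {y : Euc n | ε ≤ ‖y‖} := by
      refine closure_minimal ?_ (isClosed_le continuous_const continuous_norm) hx
      intro y hy
      have := hy.2
      simp at this
      exact this.le
    exact this
  rcases hxε.lt_or_eq with h | h
  · have hxm : x ∈ (closedBall (0 : Euc n) ε)ᶜ := by simpa using h
    obtain ⟨r, hr, hrs⟩ := Metric.isOpen_iff.1 isClosed_closedBall.isOpen_compl x hxm
    have hconv : Convex ℝ (Ω ∩ ball x r) := hC.inter (convex_ball x r)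
    have hopen : IsOpen (Ω ∩ ball x r) := hO.inter isOpen_ball
    have hcl : x ∈ closure (Ω ∩ ball x r) := by
      exact IsOpen.closure_inter isOpen_ball ⟨hxc, mem_ball_self hr⟩
    have hne : (Ω ∩ ball x r).Nonempty := closure_nonempty_iff.1 ⟨x, hcl⟩
    refine (uniqueDiffWithinAt_convex hconv (by rwa [hopen.interior_eq]) hcl).mono ?_
    intro y hy
    exact key ⟨subset_closure hy.1, hrs hy.2⟩
  · have h0 := hε.1
    have h1 := hε.2
    set δ : ℝ := (ε₀ - ε) / (2 * ε) with hδ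
    have hδ0 : 0 < δ := by rw [hδ]; apply div_pos <;> linarith
    have hδε : δ * ε = (ε₀ - ε) / 2 := by rw [hδ]; field_simp
    have hpos : 0 < δ * ε := by positivity
    refine (uniqueDiffWithinAt_convex (s := ball ((1 + δ) • x) (δ * ε)) (convex_ball _ _)
      (by rw [isOpen_ball.interior_eq]; exact nonempty_ball.2 hpos) ?_).mono ?_
    · rw [closure_ball _ hpos.ne', mem_closedBall, dist_eq_norm]
      have : x - (1 + δ) • x = (-δ) • x := by module
      rw [this, norm_smul, ← h, norm_neg, Real.norm_eq_abs, abs_of_pos hδ0]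
    · intro y hy
      rw [mem_ball, dist_eq_norm] at hy
      have hz : ‖(1 + δ) • x‖ = ε + δ * ε := by
        rw [norm_smul, ← h, Real.norm_eq_abs, abs_of_pos (by linarith)]; ring
      have a1 : ‖y‖ ≤ ‖y - (1 + δ) • x‖ + ‖(1 + δ) • x‖ := by
        simpa using norm_add_le (y - (1 + δ) • x) ((1 + δ) • x)
      have a2 : ‖(1 + δ) • x‖ ≤ ‖y - (1 + δ) • x‖ + ‖y‖ := by
        rw [norm_sub_rev]
        simpa using norm_add_le ((1 + δ) • x - y) y
      refine key ⟨subset_closure (hsub ?_), ?_⟩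
      · simp; linarith
      · simp; linarith

lemma ring_cases {Ω : Set (Euc n)} (hO : IsOpen Ω) {ε : ℝ} {x : Euc n} (hx : x ∈ ringSet Ω 0 ε) :
    x ∈ Ω \ closedBall 0 ε ∨ x ∈ frontier Ω ∪ sphere (0 : Euc n) ε := by
  have hxc : x ∈ closure Ω := closure_mono sdiff_subset hx
  have hxε : ε ≤ ‖x‖ := by
    have : x ∈ {y : Euc n | ε ≤ ‖y‖} := by
      refine closure_minimal ?_ (isClosed_le continuous_const continuous_norm) hx
      intro y hy
      have := hy.2
      simp at this
      exact this.le
    exact this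
  rcases hxε.lt_or_eq with h | h
  · by_cases hxO : x ∈ Ω
    · left; exact ⟨hxO, by simpa using h⟩
    · right; left
      rw [hO.frontier_eq]; exact ⟨hxc, hxO⟩
  · right; right; simp [h]

lemma hess_dd {U R : Set (Euc n)} (hU : IsOpen U) (hUR : U ⊆ R) {u : Euc n → ℝ}
    (hu : ContDiffOn ℝ (4:ℕ) u U) {x : Euc n} (hx : x ∈ U) (a : Euc n) :
    iteratedFDerivWithin ℝ 2 u R x ![a, a] = dd a (dd a u) x := by
  have hR : R =ᶠ[𝓝 x] univ :=
    Filter.eventuallyEq_univ.2 (Filter.mem_of_superset (hU.mem_nhds hx) hUR)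
  rw [iteratedFDerivWithin_congr_set hR, iteratedFDerivWithin_univ, iteratedFDeriv_two_apply,
    dd_dd hU (hu.of_le (by norm_num)) hx]
  simp

lemma quad_le_norm (B : Matrix (Fin n) (Fin n) ℝ) {v : Euc n} (hv : ‖v‖ = 1) :
    ⟪v, Matrix.toEuclideanCLM (𝕜 := ℝ) B v⟫ ≤ ‖Matrix.toEuclideanCLM (𝕜 := ℝ) B‖ := by
  refine (real_inner_le_norm _ _).trans ?_
  have := (Matrix.toEuclideanCLM (𝕜 := ℝ) B).le_opNorm v
  rw [hv] at *
  linarith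

lemma max_principle {Ω : Set (Euc n)} {k : ℕ} (hn : 0 < n) (hO : IsOpen Ω) (hC : Convex ℝ Ω)
    (hb : IsBounded Ω) {ε₀ ε : ℝ}
    (hε : ε ∈ Ioo (0:ℝ) ε₀) (hsub : closedBall (0 : Euc n) ε₀ ⊆ Ω) {M : ℝ} {u : Euc n → ℝ}
    (hsol : IsSol (k+1) Ω (0 : Euc n) ε M u) (hu : ContDiffOn ℝ 4 u (ringSet Ω (0 : Euc n) ε))
    {K : ℝ} (hK : ∀ p ∈ frontier Ω ∪ sphere (0 : Euc n) ε,
            hessOpNormWithin u (ringSet Ω (0 : Euc n) ε) p ≤ K) {x : Euc n}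
    (hx : x ∈ Ω \ closedBall 0 ε) {ξ : Euc n} (hξ : ‖ξ‖ = 1) :
    ⟪ξ, Matrix.toEuclideanCLM (𝕜 := ℝ) (hessianWithin u (ringSet Ω (0 : Euc n) ε) x) ξ⟫ ≤ K := by
  set R := ringSet Ω (0 : Euc n) ε with hR
  set U := Ω \ closedBall (0 : Euc n) ε with hUdef
  have hU : IsOpen U := hO.sdiff isClosed_closedBall
  have hUR : U ⊆ R := subset_closure
  have huU : ContDiffOn ℝ (4:ℕ) u U := hu.mono hUR
  have hRc : IsCompact R := Metric.isCompact_of_isClosed_isBounded isClosed_closure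
    (hb.subset sdiff_subset).closure
  obtain ⟨N, hN⟩ := hRc.isBounded.exists_norm_le
  let w : Euc n → ℝ := fun y => iteratedFDerivWithin ℝ 2 u R y ![ξ, ξ]
  have hw : ContinuousOn w R := by
    have h := hu.continuousOn_iteratedFDerivWithin (m := 2) (by norm_num)
      (ring_uniqueDiff hn hO hC hε hsub)
    exact (ContinuousMultilinearMap.apply ℝ (fun _ : Fin 2 => Euc n) ℝ ![ξ, ξ]).continuous.comp_continuousOn h
  have hdiag : ∀ y ∈ U, ∀ a, ⟪a, Matrix.toEuclideanCLM (𝕜 := ℝ) (hessianWithin u R y) a⟫ =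
      dd a (dd a u) y := fun y hy a => by rw [hess_quad, hess_dd hU hUR huU hy]
  have hGC : ∀ y ∈ U, ∃ h : (hessianWithin u R y).IsHermitian, GC (k+1) Finset.univ h.eigenvalues ∧
      EE Finset.univ (k+1) h.eigenvalues = 1 := by
    intro y hy
    obtain ⟨⟨h, hj⟩, hs⟩ := hsol.2.1 y hy
    refine ⟨h, fun j hjk => ?_, ?_⟩
    · rcases j with _ | j
      · simp [EE_zero]
      · exact hj (j+1) (by omega) hjk
    · unfold sigmaMat at hs
      rw [dif_pos h] at hs
      exact hs
  have main : ∀ δ > 0, w x ≤ K + δ * N^2 := by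
    intro δ hδ
    obtain ⟨z, hzR, hz⟩ := hRc.exists_isMaxOn ⟨x, hUR hx⟩
      (hw.add ((continuous_norm.pow 2).const_mul δ |>.continuousOn))
    have hz' : ∀ y ∈ R, w y + δ * ‖y‖^2 ≤ w z + δ * ‖z‖^2 := fun y hy => hz hy
    rcases ring_cases hO hzR with hzU | hzF
    · exfalso
      obtain ⟨h, hg, h1⟩ := hGC z hzU
      refine no_interior_max hU huU hδ ξ hzU h.eigenvectorBasis hn
        (fun l => EE (Finset.univ.erase l) k h.eigenvalues)
        (fun l => GC_erase hg (Finset.mem_univ l) k le_rfl) ?_ ?_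
      · intro y hy
        obtain ⟨h', hg', h1'⟩ := hGC y hy
        have hm := diag_mem h' ⟨hg', h1'.ge⟩ h.eigenvectorBasis
        have hs := support hg h1 hm
        rw [← sub_nonneg, ← Finset.sum_sub_distrib]
        refine hs.trans_eq ?_
        apply Finset.sum_congr rfl
        intro l _
        rw [← hdiag y hy, ← hdiag z hzU (h.eigenvectorBasis l), quad_spec h, Finset.sum_eq_single l]
        · rw [real_inner_self_eq_norm_sq, h.eigenvectorBasis.orthonormal.1 l]; ring
        · intro j _ hj
          rw [h.eigenvectorBasis.orthonormal.2 hj]; simp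
        · simp
      · intro y hy
        have := hz' y (hUR hy)
        simp only [w] at this
        rwa [hess_dd hU hUR huU hy, hess_dd hU hUR huU hzU] at this
    · have a1 := hz' x (hUR hx)
      have a2 : w z ≤ K := by
        have := (quad_le_norm (hessianWithin u R z) hξ).trans (hK z hzF)
        rwa [hess_quad] at this
      have a3 : ‖z‖^2 ≤ N^2 := pow_le_pow_left₀ (norm_nonneg _) (hN z hzR) 2
      nlinarith [mul_nonneg hδ.le (sq_nonneg ‖x‖), mul_le_mul_of_nonneg_left a3 hδ.le]
  rw [hess_quad]
  refine le_of_forall_pos_le_add (fun η hη => ?_)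
  have hp : 0 < N^2 + 1 := by positivity
  have := main (η / (N^2+1)) (by positivity)
  have h2 : η / (N^2+1) * N^2 ≤ η := by
    rw [div_mul_eq_mul_div, div_le_iff₀ hp]; nlinarith
  change w x ≤ K + η
  linarith

end fin

/-- global `C²` estimate in terms of the boundary `C²` bound,
with a constant depending only on `n` and `k`. -/
theorem statement13 {n k : ℕ} (hk : 1 ≤ k) (hkn : k ≤ n) :
    ∃ C : ℝ, 0 < C ∧ ∀ Ω₁ : Set (Euc n), IsOpen Ω₁ → Convex ℝ Ω₁ →
      IsBounded Ω₁ → HasSmoothBoundary Ω₁ →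
      ∀ ε₀ : ℝ, 0 < ε₀ → closedBall (0 : Euc n) ε₀ ⊆ Ω₁ →
      ∀ ψ : Euc n → ℝ, IsSol22 k Ω₁ ψ →
      ∀ M₁ : ℝ, 0 < M₁ → (∀ x ∈ closure Ω₁, -ψ x < M₁) →
      (∀ ε ∈ Ioo (0:ℝ) ε₀, ∀ x ∈ frontier Ω₁, underSol k (0 : Euc n) ε M₁ x ≤ 0) →
      ∀ M : ℝ, M₁ < M → ∀ ε ∈ Ioo (0:ℝ) ε₀, ∀ u : Euc n → ℝ,
        IsSol k Ω₁ (0 : Euc n) ε M u →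
        ContDiffOn ℝ 4 u (ringSet Ω₁ (0 : Euc n) ε) →
        ∀ K : ℝ,
          (∀ p ∈ frontier Ω₁ ∪ sphere (0 : Euc n) ε,
            hessOpNormWithin u (ringSet Ω₁ (0 : Euc n) ε) p ≤ K) →
          ∀ x ∈ ringSet Ω₁ (0 : Euc n) ε,
            hessOpNormWithin u (ringSet Ω₁ (0 : Euc n) ε) x ≤ C * (1 + K) := by
  obtain ⟨k, rfl⟩ : ∃ j, k = j + 1 := ⟨k - 1, by omega⟩
  have hn : 0 < n := by omega
  refine ⟨(n:ℝ)^2 + 1, by positivity, ?_⟩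
  intro Ω hO hC hb _ ε₀ hε₀ hsub ψ _ M₁ _ _ _ M _ ε hε u hsol hu K hK x hx
  have hn2 : (0:ℝ) ≤ (n:ℝ)^2 := by positivity
  have fin : hessOpNormWithin u (ringSet Ω (0 : Euc n) ε) x ≤ (n:ℝ)^2 * K ∨
      hessOpNormWithin u (ringSet Ω (0 : Euc n) ε) x ≤ K := by
    rcases ring_cases hO hx with hxU | hxF
    · left
      obtain ⟨⟨h, hj⟩, -⟩ := hsol.2.1 x hxU
      have h1 := hj 1 le_rfl (by omega)
      have h2 : 0 < ∑ i, h.eigenvalues i := by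
        rw [← EE_one]; exact h1
      exact norm_bound h h2 (fun v hv => max_principle hn hO hC hb hε hsub hsol hu hK hxU hv)
    · right
      exact hK x hxF
  have h0 : 0 ≤ hessOpNormWithin u (ringSet Ω (0 : Euc n) ε) x := norm_nonneg _
  have hnp : (0:ℝ) < (n:ℝ)^2 := by positivity
  rcases fin with h | h
  · have : 0 ≤ K := by
      by_contra hc
      push Not at hc
      nlinarith
    nlinarith
  · nlinarith
end
end

section
/- Let M > M₁(Ω₁), let (ε_m) ⊂ (0, ε₀) with ε_m → 0, and for each m let u^{ε_m} ∈ C²(Ω̄^{ε_m}) be the strictly k-convex solution of problem (2.1) with inner ball B_{ε_m}(0), satisfying u^{ε_m} ≥ u̲^{ε_m} in Ω^{ε_m}; let ũ^{ε_m} be its extension by −M on B̄_{ε_m}(0). Suppose the sequence (ũ^{ε_m}) is nondecreasing in m and converges, in C¹ on compact subsets of Ω₁ \ {0}, to a function v : Ω₁ \ {0} → ℝ, and extend v to 0 by v(0) = limsup_{x→0} v(x). Then v is k-convex in the viscosity sense in Ω₁: for every quadratic polynomial q on ℝⁿ such that v − q attains a finite local maximum at some point of Ω₁, one has σ_k(D²q)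 ≥ 0. -/
open Set Metric Filter Topology Bornology
open scoped RealInnerProductSpace

noncomputable section

section Alg
open Polynomial

theorem aux_splits_deriv (p : ℝ[X]) (hp : p.Splits) : (derivative p).Splits := by
  by_cases h0 : p.natDegree = 0
  · rw [Polynomial.derivative_of_natDegree_zero h0]; exact Polynomial.Splits.zero
  · rw [Polynomial.splits_iff_card_roots] at hp ⊢
    have h1 := Polynomial.card_roots_le_derivative p
    have h2 := Polynomial.natDegree_derivative_le p
    have h3 := Polynomial.card_roots' (derivative p)
    omega

theorem aux_laguerre (p : ℝ[X]) (hp : p.Splits) (x : ℝ) :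
    p.eval x * (derivative (derivative p)).eval x ≤ ((derivative p).eval x) ^ 2 := by
  rw [hp.eq_prod_roots]
  generalize p.leadingCoeff = a
  generalize p.roots = s
  have key : ((s.map (fun r => X - C r)).prod).eval x *
      (derivative (derivative (s.map (fun r => X - C r)).prod)).eval x ≤
      ((derivative (s.map (fun r => X - C r)).prod).eval x) ^ 2 := by
    induction s using Multiset.induction_on with
    | empty => simp
    | cons r s ih =>
      simp only [Multiset.map_cons, Multiset.prod_cons]
      generalize (Multiset.map (fun r => X - C r) s).prod = h at ih ⊢
      simp only [derivative_mul, derivative_add, derivative_sub, derivative_X, derivative_C,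
        eval_add, eval_mul, eval_sub, eval_X, eval_C, sub_zero, one_mul]
      nlinarith [mul_le_mul_of_nonneg_left ih (sq_nonneg (x - r)), sq_nonneg (eval x h)]
  simp only [derivative_mul, derivative_C, eval_mul, eval_C, zero_mul, zero_add]
  nlinarith [mul_le_mul_of_nonneg_left key (sq_nonneg a)]

theorem aux_coeff_newton (p : ℝ[X]) (hp : p.Splits) (j : ℕ) :
    p.coeff j * p.coeff (j + 2) ≤ (p.coeff (j + 1)) ^ 2 := by
  have hs : ∀ j, (derivative^[j] p).Splits := by
    intro j
    induction j with
    | zero => exact hp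
    | succ j ih => rw [Function.iterate_succ_apply']; exact aux_splits_deriv _ ih
  have h := aux_laguerre _ (hs j) 0
  rw [← Function.iterate_succ_apply' derivative, ← Function.iterate_succ_apply' derivative] at h
  simp only [← coeff_zero_eq_eval_zero, coeff_iterate_derivative, zero_add, Nat.descFactorial_self,
    nsmul_eq_mul, Nat.succ_eq_add_one, Nat.factorial_succ, Nat.cast_mul] at h
  have hf : (0:ℝ) < (j.factorial : ℝ) := by exact_mod_cast Nat.factorial_pos j
  by_contra hc
  push Not at hc
  have hj : (0:ℝ) ≤ j := Nat.cast_nonneg j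
  push_cast at h
  have h2 : ((j.factorial : ℝ)^2 * (j+1)) * ((j+2) * (p.coeff j * p.coeff (j+2))) ≤
      ((j.factorial : ℝ)^2 * (j+1)) * ((j+1) * (p.coeff (j+1))^2) := by
    have e : j + 1 + 1 = j + 2 := rfl
    rw [e] at h
    nlinarith [h]
  have h3 := le_of_mul_le_mul_left h2 (by positivity)
  nlinarith [sq_nonneg (p.coeff (j+1)), mul_lt_mul_of_pos_left hc (by positivity : (0:ℝ) < j+1)]

/-- generating polynomial -/
def genP {ι : Type*} (s : Finset ι) (l : ι → ℝ) : ℝ[X] := ∏ i ∈ s, (1 + C (l i) * X)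

theorem genP_coeff {n : ℕ} (j : ℕ) (l : Fin n → ℝ) :
    (genP Finset.univ l).coeff j = esymmVec j l := by
  unfold genP esymmVec
  rw [Finset.prod_one_add, finsetSum_coeff, Finset.powersetCard_eq_filter, Finset.sum_filter]
  refine Finset.sum_congr rfl fun t _ => ?_
  rw [Finset.prod_mul_distrib, Finset.prod_const, ← map_prod, coeff_C_mul, coeff_X_pow]
  by_cases h : t.card = j
  · simp [h]
  · simp [h, Ne.symm h]

theorem genP_splits {ι : Type*} (s : Finset ι) (l : ι → ℝ) : (genP s l).Splits := by
  unfold genP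
  refine Polynomial.Splits.prod fun i _ => Polynomial.Splits.of_natDegree_le_one ?_
  compute_degree

theorem genP_coeff_zero {ι : Type*} (s : Finset ι) (l : ι → ℝ) : (genP s l).coeff 0 = 1 := by
  simp [genP, coeff_zero_eq_eval_zero, eval_prod]

theorem genP_ins {ι : Type*} [DecidableEq ι] [Fintype ι] (i : ι) (l : ι → ℝ) (j : ℕ) :
    (genP Finset.univ l).coeff (j+1) = (genP (Finset.univ.erase i) l).coeff (j+1) +
      l i * (genP (Finset.univ.erase i) l).coeff j := by
  have : genP Finset.univ l = genP (Finset.univ.erase i) l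
      + C (l i) * (genP (Finset.univ.erase i) l * X) := by
    unfold genP
    rw [← Finset.mul_prod_erase _ _ (Finset.mem_univ i)]; ring
  rw [this, coeff_add, coeff_C_mul, coeff_mul_X]

/-- The restriction of a vector of the cone lies in the previous cone. -/
theorem genP_erase_pos {ι : Type*} [DecidableEq ι] [Fintype ι] (i : ι) (l : ι → ℝ) (k : ℕ)
    (h : ∀ j, j ≤ k → 0 < (genP Finset.univ l).coeff j) (j : ℕ) (hj : j + 1 ≤ k) :
    0 < (genP (Finset.univ.erase i) l).coeff j := by
  induction j with
  | zero => rw [genP_coeff_zero]; exact one_pos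
  | succ j ih =>
    have h0 := ih (by omega)
    have h1 := h (j+1) (by omega)
    have h2 := h (j+2) (by omega)
    have hN := aux_coeff_newton _ (genP_splits (Finset.univ.erase i) l) j
    rw [genP_ins i] at h1 h2
    change 0 < _ + _ * (genP (Finset.univ.erase i) l).coeff (j+1) at h2
    change 0 < (genP (Finset.univ.erase i) l).coeff (j+2) + _ at h2
    generalize (genP (Finset.univ.erase i) l).coeff j = a at *
    generalize (genP (Finset.univ.erase i) l).coeff (j+1) = b at *
    generalize (genP (Finset.univ.erase i) l).coeff (j+2) = c at *
    by_contra hb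
    push Not at hb
    nlinarith [mul_pos h0 h2, mul_nonneg (neg_nonneg.2 hb) h1.le]

theorem genP_update {ι : Type*} [DecidableEq ι] [Fintype ι] (i : ι) (l : ι → ℝ) (t : ℝ)
    (ht : l i ≤ t) (k : ℕ)
    (h : ∀ j, j ≤ k → 0 < (genP Finset.univ l).coeff j) (j : ℕ) (hj : j ≤ k) :
    0 < (genP Finset.univ (Function.update l i t)).coeff j := by
  cases j with
  | zero => rw [genP_coeff_zero]; exact one_pos
  | succ j =>
    have e : genP (Finset.univ.erase i) (Function.update l i t) = genP (Finset.univ.erase i) l := by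
      unfold genP
      refine Finset.prod_congr rfl fun m hm => ?_
      rw [Function.update_of_ne (Finset.ne_of_mem_erase hm)]
    have h1 := h (j+1) hj
    have h2 := genP_erase_pos i l k h j hj
    rw [genP_ins i] at h1 ⊢
    rw [e, Function.update_self]
    nlinarith

theorem genP_mono {ι : Type*} [DecidableEq ι] [Fintype ι] (l m : ι → ℝ) (hlm : ∀ i, l i ≤ m i)
    (k : ℕ) (h : ∀ j, j ≤ k → 0 < (genP Finset.univ l).coeff j) :
    ∀ j, j ≤ k → 0 < (genP Finset.univ m).coeff j := by
  have key : ∀ s : Finset ι, ∀ j, j ≤ k → 0 < (genP Finset.univ (s.piecewise m l)).coeff j := by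
    intro s
    induction s using Finset.induction_on with
    | empty => simpa using h
    | insert i s hi ih =>
      intro j hj
      rw [Finset.piecewise_insert]
      refine genP_update i _ _ ?_ k ih j hj
      rw [Finset.piecewise_eq_of_notMem _ _ _ hi]; exact hlm i
  simpa using key Finset.univ

theorem esymmVec_mono {n k : ℕ} (l m : Fin n → ℝ) (hlm : ∀ i, l i ≤ m i)
    (h : ∀ j, 1 ≤ j → j ≤ k → 0 < esymmVec j l) : 0 < esymmVec k m := by
  rw [← genP_coeff]
  refine genP_mono l m hlm k (fun j hj => ?_) k le_rfl
  rcases Nat.eq_zero_or_pos j with rfl | h0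
  · rw [genP_coeff_zero]; exact one_pos
  · rw [genP_coeff]; exact h j h0 hj

end Alg
section Weyl

/-- quadratic form of a matrix -/
def qForm {n : ℕ} (A : Matrix (Fin n) (Fin n) ℝ) (w : Euc n) : ℝ :=
  ∑ i, ∑ j, A i j * w i * w j

theorem qForm_inner {n : ℕ} (A : Matrix (Fin n) (Fin n) ℝ) (w : Euc n) :
    qForm A w = ⟪w, Matrix.toEuclideanLin A w⟫ := by
  rw [PiLp.inner_apply]
  unfold qForm
  refine Finset.sum_congr rfl fun i _ => ?_
  simp only [RCLike.inner_apply, conj_trivial, Matrix.toLpLin_apply, Matrix.mulVec, dotProduct]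
  rw [Finset.sum_mul]
  refine Finset.sum_congr rfl fun j _ => ?_
  ring

theorem qForm_eig {n : ℕ} {A : Matrix (Fin n) (Fin n) ℝ} (hA : A.IsHermitian) (w : Euc n) :
    qForm A w = ∑ i, hA.eigenvalues i * ⟪hA.eigenvectorBasis i, w⟫ ^ 2 := by
  rw [qForm_inner, ← OrthonormalBasis.sum_inner_mul_inner hA.eigenvectorBasis]
  refine Finset.sum_congr rfl fun i _ => ?_
  have hs := Matrix.isSymmetric_toEuclideanLin_iff.mpr hA
  rw [← hs (hA.eigenvectorBasis i) w]
  have : Matrix.toEuclideanLin A (hA.eigenvectorBasis i) =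
      hA.eigenvalues i • hA.eigenvectorBasis i := by
    have := hA.mulVec_eigenvectorBasis i
    ext m
    simpa [Matrix.toLpLin_apply] using congrFun this m
  rw [this, inner_smul_left, real_inner_comm]
  simp; ring

theorem weyl_le {n : ℕ} {H A : Matrix (Fin n) (Fin n) ℝ} (hH : H.IsHermitian) (hA : A.IsHermitian)
    (η : ℝ) (h : ∀ w : Euc n, qForm H w ≤ qForm A w + η * ‖w‖ ^ 2) (i : Fin n) :
    hH.eigenvalues i ≤ hA.eigenvalues i + η := by
  classical
  let e : Fin n ≃ Fin (Fintype.card (Fin n)) := (Fintype.equivOfCardEq (Fintype.card_fin _)).symm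
  have aH : ∀ a b, e a ≤ e b → hH.eigenvalues b ≤ hH.eigenvalues a := fun a b hab =>
    hH.eigenvalues₀_antitone hab
  have aA : ∀ a b, e a ≤ e b → hA.eigenvalues b ≤ hA.eigenvalues a := fun a b hab =>
    hA.eigenvalues₀_antitone hab
  let L : Euc n →ₗ[ℝ] ({j : Fin n // j ≠ i} → ℝ) := LinearMap.pi fun j =>
    if e i < e j then (innerSL ℝ (hH.eigenvectorBasis j.1)).toLinearMap
      else (innerSL ℝ (hA.eigenvectorBasis j.1)).toLinearMap
  have hker : LinearMap.ker L ≠ ⊥ := by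
    apply LinearMap.ker_ne_bot_of_finrank_lt
    have : 0 < n := i.pos
    simp
    omega
  obtain ⟨w, hw, hw0⟩ := Submodule.exists_mem_ne_zero_of_ne_bot hker
  have hL : ∀ j : {j : Fin n // j ≠ i}, L w j = 0 := fun j => by
    rw [LinearMap.mem_ker.1 hw]; rfl
  have c1 : ∀ j, e i < e j → ⟪hH.eigenvectorBasis j, w⟫ = 0 := by
    intro j hj
    have := hL ⟨j, by rintro rfl; exact lt_irrefl _ hj⟩
    simpa [L, hj] using this
  have c2 : ∀ j, e j < e i → ⟪hA.eigenvectorBasis j, w⟫ = 0 := by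
    intro j hj
    have := hL ⟨j, by rintro rfl; exact lt_irrefl _ hj⟩
    simpa [L, not_lt.2 hj.le] using this
  have n1 : ∑ j, ⟪hH.eigenvectorBasis j, w⟫ ^ 2 = ‖w‖ ^ 2 := by
    simpa using hH.eigenvectorBasis.sum_sq_norm_inner_right w
  have n2 : ∑ j, ⟪hA.eigenvectorBasis j, w⟫ ^ 2 = ‖w‖ ^ 2 := by
    simpa using hA.eigenvectorBasis.sum_sq_norm_inner_right w
  have i1 : hH.eigenvalues i * ‖w‖ ^ 2 ≤ qForm H w := by
    rw [qForm_eig hH, ← n1, Finset.mul_sum]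
    refine Finset.sum_le_sum fun j _ => ?_
    rcases lt_or_ge (e i) (e j) with hj | hj
    · rw [c1 j hj]; simp
    · exact mul_le_mul_of_nonneg_right (aH j i hj) (sq_nonneg _)
  have i2 : qForm A w ≤ hA.eigenvalues i * ‖w‖ ^ 2 := by
    rw [qForm_eig hA, ← n2, Finset.mul_sum]
    refine Finset.sum_le_sum fun j _ => ?_
    rcases lt_or_ge (e j) (e i) with hj | hj
    · rw [c2 j hj]; simp
    · exact mul_le_mul_of_nonneg_right (aA i j hj) (sq_nonneg _)
  have hpos : 0 < ‖w‖ ^ 2 := by positivity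
  have := h w
  by_contra hc
  push Not at hc
  nlinarith [mul_lt_mul_of_pos_right hc hpos]

theorem nonneg_eig {n : ℕ} {A : Matrix (Fin n) (Fin n) ℝ} (hA : A.IsHermitian)
    (η : ℝ) (h : ∀ w : Euc n, 0 ≤ qForm A w + η * ‖w‖ ^ 2) (i : Fin n) :
    0 ≤ hA.eigenvalues i + η := by
  have := h (hA.eigenvectorBasis i)
  rw [qForm_eig hA, Finset.sum_eq_single i] at this
  · simpa using this
  · intro j _ hj
    rw [hA.eigenvectorBasis.inner_eq_zero hj]; simp
  · simp

theorem esymmVec_nonneg {n k : ℕ} (l : Fin n → ℝ) (h : ∀ i, 0 ≤ l i) : 0 ≤ esymmVec k l :=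
  Finset.sum_nonneg fun _ _ => Finset.prod_nonneg fun i _ => h i

theorem sigma_limit {n k : ℕ} {A : Matrix (Fin n) (Fin n) ℝ} (hA : A.IsHermitian)
    (h : ∀ η : ℝ, 0 < η → 0 ≤ esymmVec k (fun i => hA.eigenvalues i + η)) : 0 ≤ sigmaMat k A := by
  have e : sigmaMat k A = esymmVec k hA.eigenvalues := by
    unfold sigmaMat; exact dif_pos hA
  rw [e]
  have hc : Continuous fun η : ℝ => esymmVec k (fun i => hA.eigenvalues i + η) := by
    unfold esymmVec; fun_prop
  have ht : Tendsto (fun η : ℝ => esymmVec k (fun i => hA.eigenvalues i + η)) (𝓝[>] 0)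
      (𝓝 (esymmVec k hA.eigenvalues)) := by
    have := hc.tendsto 0
    simp only [add_zero] at this
    exact this.mono_left nhdsWithin_le_nhds
  refine ge_of_tendsto ht ?_
  filter_upwards [self_mem_nhdsWithin] with η hη using h η hη

end Weyl

section Calc

theorem second_deriv_le (φ : ℝ → ℝ) (β γ : ℝ) (hφ : ContDiffAt ℝ 2 φ 0)
    (h : ∀ᶠ t in 𝓝 (0:ℝ), φ t ≤ φ 0 + β * t + γ * t ^ 2 / 2) : deriv (deriv φ) 0 ≤ γ := by
  let g : ℝ → ℝ := fun t => φ t - β * t - γ * t ^ 2 / 2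
  have hmax : IsLocalMax g 0 := by
    filter_upwards [h] with t ht
    simp only [g]; linarith
  have hd : ∀ᶠ t in 𝓝 (0:ℝ), DifferentiableAt ℝ φ t := by
    have := hφ.eventually (by simp)
    filter_upwards [this] with t ht using ht.differentiableAt (by simp)
  have hg1 : deriv g =ᶠ[𝓝 0] fun t => deriv φ t - β - γ * t := by
    filter_upwards [hd] with t ht
    have h1 : HasDerivAt g (deriv φ t - β * 1 - γ * (2 * t) / 2) t := by
      refine (ht.hasDerivAt.sub ((hasDerivAt_id t).const_mul β)).sub ?_
      have := ((hasDerivAt_pow 2 t).const_mul γ).div_const 2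
      simpa using this
    rw [h1.deriv]; ring
  have hd2 : DifferentiableAt ℝ (deriv φ) 0 := by
    have h1 : ContDiffAt ℝ 1 (fun t => fderiv ℝ φ t 1) 0 :=
      (hφ.fderiv_right (m := 1) (by norm_num)).clm_apply contDiffAt_const
    exact h1.differentiableAt (by simp)
  have hg2 : deriv (deriv g) 0 = deriv (deriv φ) 0 - γ := by
    rw [hg1.deriv_eq]
    have := (hd2.hasDerivAt.sub_const β).sub ((hasDerivAt_id (0:ℝ)).const_mul γ)
    have h' := this.deriv
    simp only [mul_one] at h'
    exact h'
  have hgc : ContinuousAt g 0 := by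
    have := hφ.continuousAt
    simp only [g]; fun_prop
  by_contra hc
  push Not at hc
  have hmin := isLocalMin_of_deriv_deriv_pos (f := g) (x₀ := 0) (by rw [hg2]; linarith)
    hmax.deriv_eq_zero hgc
  have hconst : g =ᶠ[𝓝 0] fun _ => g 0 := by
    filter_upwards [hmax, hmin] with t h1 h2 using le_antisymm h1 h2
  have : deriv (deriv g) 0 = 0 := by
    rw [hconst.deriv.deriv_eq]; simp
  linarith

theorem quad_line {n : ℕ} (A : Matrix (Fin n) (Fin n) ℝ) (b : Euc n) (c η : ℝ) (x x₀ w : Euc n) :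
    ∃ β : ℝ, ∀ t : ℝ, quadPoly A b c (x + t • w) + η / 2 * ‖x + t • w - x₀‖ ^ 2 =
      quadPoly A b c x + η / 2 * ‖x - x₀‖ ^ 2 + β * t + (qForm A w + η * ‖w‖ ^ 2) * t ^ 2 / 2 := by
  refine ⟨(∑ i, ∑ j, (A i j * x i * w j + A i j * w i * x j)) / 2 + ⟪b, w⟫ + η * ⟪x - x₀, w⟫,
    fun t => ?_⟩
  have e1 : x + t • w - x₀ = (x - x₀) + t • w := by abel
  have e2 : ‖x + t • w - x₀‖ ^ 2 = ‖x - x₀‖ ^ 2 + 2 * (t * ⟪x - x₀, w⟫) + t ^ 2 * ‖w‖ ^ 2 := by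
    rw [e1, norm_add_sq_real, inner_smul_right, norm_smul, mul_pow, Real.norm_eq_abs, sq_abs]
  have e3 : (∑ i, ∑ j, A i j * (x + t • w) i * (x + t • w) j) =
      (∑ i, ∑ j, A i j * x i * x j) + t * (∑ i, ∑ j, (A i j * x i * w j + A i j * w i * x j))
      + t ^ 2 * qForm A w := by
    unfold qForm
    simp only [Finset.mul_sum, ← Finset.sum_add_distrib]
    refine Finset.sum_congr rfl fun i _ => Finset.sum_congr rfl fun j _ => ?_
    simp only [PiLp.add_apply, PiLp.smul_apply, smul_eq_mul]
    ring
  unfold quadPoly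
  rw [e2, e3, inner_add_right, inner_smul_right]
  ring

set_option maxHeartbeats 2000000 in
theorem second_order {n : ℕ} (A : Matrix (Fin n) (Fin n) ℝ) (b : Euc n) (c η : ℝ) (x x₀ : Euc n)
    (f : Euc n → ℝ) (hf : ContDiffAt ℝ 2 f x)
    (hmax : IsLocalMax (fun y => f y - (quadPoly A b c y + η / 2 * ‖y - x₀‖ ^ 2)) x) (w : Euc n) :
    fderiv ℝ (fderiv ℝ f) x w w ≤ qForm A w + η * ‖w‖ ^ 2 := by
  obtain ⟨β, hβ⟩ := quad_line A b c η x x₀ w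
  have hline : ContDiff ℝ 2 (fun t : ℝ => x + t • w) := by fun_prop
  have ht : Tendsto (fun t : ℝ => x + t • w) (𝓝 0) (𝓝 x) := by
    have := hline.continuous.tendsto 0
    simpa using this
  have hφ : ContDiffAt ℝ 2 (fun t : ℝ => f (x + t • w)) 0 :=
    ContDiffAt.comp (0:ℝ) (by simpa using hf) hline.contDiffAt
  have key := second_deriv_le (fun t => f (x + t • w)) β (qForm A w + η * ‖w‖ ^ 2) hφ (by
    filter_upwards [ht.eventually hmax] with t h
    rw [hβ t] at h
    simp only [zero_smul, add_zero]
    linarith)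
  refine le_of_eq_of_le ?_ key
  have hlinD : ∀ t : ℝ, HasDerivAt (fun t : ℝ => x + t • w) w t := by
    intro t
    simpa using ((hasDerivAt_id t).smul_const w).const_add x
  have h1 : deriv (fun t : ℝ => f (x + t • w)) =ᶠ[𝓝 0]
      fun t : ℝ => fderiv ℝ f (x + t • w) w := by
    filter_upwards [ht.eventually (hf.eventually (by simp))] with t h
    exact ((h.differentiableAt (by simp)).hasFDerivAt.comp_hasDerivAt t (hlinD t)).deriv
  rw [h1.deriv_eq]
  have h2 : HasFDerivAt (fderiv ℝ f) (fderiv ℝ (fderiv ℝ f) x) (x + (0:ℝ) • w) := by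
    simpa using ((hf.fderiv_right (m := 1) (by norm_num)).differentiableAt (by simp)).hasFDerivAt
  have h3 := (h2.comp_hasDerivAt (0:ℝ) (hlinD 0)).clm_apply (hasDerivAt_const (0:ℝ) w)
  simpa using h3.deriv.symm

theorem qForm_hess {n : ℕ} (u : Euc n → ℝ) (s : Set (Euc n)) (x : Euc n) (hs : s ∈ 𝓝 x)
    (w : Euc n) : qForm (hessianWithin u s x) w = fderiv ℝ (fderiv ℝ u) x w w := by
  have h1 : ∀ i j, hessianWithin u s x i j = fderiv ℝ (fderiv ℝ u) x
      (EuclideanSpace.single i (1:ℝ)) (EuclideanSpace.single j (1:ℝ)) := by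
    intro i j
    unfold hessianWithin
    have hs' : s =ᶠ[𝓝 x] univ := eventuallyEq_univ.2 hs
    rw [iteratedFDerivWithin_congr_set hs', iteratedFDerivWithin_univ, iteratedFDeriv_two_apply]
    simp
  have hw : w = ∑ i, w i • EuclideanSpace.single i (1:ℝ) := by
    have := (EuclideanSpace.basisFun (Fin n) ℝ).sum_repr w
    simpa using this.symm
  unfold qForm
  simp only [h1]
  conv_rhs => rw [hw]
  simp only [map_sum, map_smul, _root_.sum_apply, _root_.smul_apply,
    smul_eq_mul, Finset.mul_sum]
  rw [Finset.sum_comm]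
  refine Finset.sum_congr rfl fun i _ => Finset.sum_congr rfl fun j _ => ?_
  ring

end Calc
section Ext

theorem extendBy_in {n : ℕ} (u : Euc n → ℝ) (e M : ℝ) (x : Euc n) (hx : x ∈ closedBall (0 : Euc n) e) :
    extendBy u 0 e M x = -M := by
  unfold extendBy; exact if_pos hx

theorem extendBy_out {n : ℕ} (u : Euc n → ℝ) (e M : ℝ) (x : Euc n) (hx : x ∉ closedBall (0 : Euc n) e) :
    extendBy u 0 e M x = u x := by
  unfold extendBy; exact if_neg hx

theorem underSol_ge {n : ℕ} (k : ℕ) (e M : ℝ) (he : 0 < e) (x : Euc n)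
    (hx : x ∉ closedBall (0 : Euc n) e) : -M ≤ underSol k 0 e M x := by
  unfold underSol
  rw [mem_closedBall, dist_zero_right, not_le] at hx
  have hc : 0 ≤ cnk n k := Real.rpow_nonneg (Nat.cast_nonneg _) _
  rw [sub_zero, ← sub_div]
  have h2 : e ^ 2 ≤ ‖x‖ ^ 2 := by gcongr
  have : 0 ≤ (‖x‖ ^ 2 - e ^ 2) / (2 * cnk n k) := div_nonneg (by linarith) (by linarith)
  linarith

theorem extendBy_cont {n : ℕ} (Ω₁ : Set (Euc n)) (u : Euc n → ℝ) (e M : ℝ)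
    (hu : ContinuousOn u (ringSet Ω₁ 0 e)) (hs : ∀ x ∈ sphere (0 : Euc n) e, u x = -M) :
    ContinuousOn (extendBy u 0 e M) Ω₁ := by
  have hcl : IsClosed (ringSet Ω₁ (0 : Euc n) e) := isClosed_closure
  have h1 : ContinuousOn (extendBy u 0 e M) (ringSet Ω₁ 0 e) := by
    refine hu.congr fun x hx => ?_
    by_cases hb : x ∈ closedBall (0 : Euc n) e
    · rw [extendBy_in u e M x hb]
      have hxs : x ∈ sphere (0 : Euc n) e := by
        rw [mem_sphere]
        refine le_antisymm hb ?_
        by_contra hlt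
        push Not at hlt
        have hd : Disjoint (ball (0 : Euc n) e) (Ω₁ \ closedBall (0 : Euc n) e) :=
          disjoint_left.2 fun y hy hy' => hy'.2 (ball_subset_closedBall hy)
        exact disjoint_left.1 (hd.closure_right isOpen_ball) hlt hx
      exact (hs x hxs).symm
    · exact extendBy_out u e M x hb
  have h2 : ContinuousOn (extendBy u 0 e M) (closedBall 0 e) :=
    continuousOn_const.congr fun x hx => extendBy_in u e M x hx
  refine (h1.union_of_isClosed h2 hcl isClosed_closedBall).mono fun x hx => ?_
  by_cases hb : x ∈ closedBall (0 : Euc n) e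
  · exact Or.inr hb
  · exact Or.inl (subset_closure ⟨hx, hb⟩)

theorem quadPoly_cont {n : ℕ} (A : Matrix (Fin n) (Fin n) ℝ) (b : Euc n) (c : ℝ) :
    Continuous (quadPoly A b c) := by
  unfold quadPoly; fun_prop

end Ext

/-- the limit `v` of the extended solutions is `k`-convex in the
viscosity sense in `Ω₁`. -/
theorem statement16 {n k : ℕ} (hk : 1 ≤ k) (hkn : k ≤ n)
    (Ω₁ : Set (Euc n)) (hΩo : IsOpen Ω₁) (hΩconv : Convex ℝ Ω₁)
    (hΩb : IsBounded Ω₁) (hΩs : HasSmoothBoundary Ω₁)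
    (ε₀ : ℝ) (hε₀ : 0 < ε₀) (hball : closedBall (0 : Euc n) ε₀ ⊆ Ω₁)
    (ψ : Euc n → ℝ) (hψ : IsSol22 k Ω₁ ψ)
    (M₁ : ℝ) (hM₁ : 0 < M₁) (hM₁ψ : ∀ x ∈ closure Ω₁, -ψ x < M₁)
    (hM₁sub : ∀ ε ∈ Ioo (0:ℝ) ε₀, ∀ x ∈ frontier Ω₁, underSol k (0 : Euc n) ε M₁ x ≤ 0)
    (M : ℝ) (hM : M₁ < M)
    (ε : ℕ → ℝ) (hεm : ∀ m, ε m ∈ Ioo (0:ℝ) ε₀) (hε0 : Tendsto ε atTop (𝓝 0))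
    (u : ℕ → Euc n → ℝ) (hu : ∀ m, IsSol k Ω₁ (0 : Euc n) (ε m) M (u m))
    (hsub : ∀ m, ∀ x ∈ Ω₁ \ closedBall (0 : Euc n) (ε m),
      underSol k (0 : Euc n) (ε m) M x ≤ u m x)
    (hmono : ∀ m, ∀ x ∈ Ω₁,
      extendBy (u m) (0 : Euc n) (ε m) M x ≤ extendBy (u (m+1)) (0 : Euc n) (ε (m+1)) M x)
    (v : Euc n → ℝ)
    (hC0 : ∀ K : Set (Euc n), K ⊆ Ω₁ \ {(0 : Euc n)} → IsCompact K →
      TendstoUniformlyOn (fun m => extendBy (u m) (0 : Euc n) (ε m) M) v atTop K)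
    (hC1 : ∀ K : Set (Euc n), K ⊆ Ω₁ \ {(0 : Euc n)} → IsCompact K →
      TendstoUniformlyOn (fun m x => fderiv ℝ (extendBy (u m) (0 : Euc n) (ε m) M) x)
        (fun x => fderiv ℝ v x) atTop K)
    (hv0 : v 0 = Filter.limsup v (𝓝[≠] (0 : Euc n))) :
    ∀ A : Matrix (Fin n) (Fin n) ℝ, A.IsHermitian → ∀ (b : Euc n) (c : ℝ),
      (∃ x₀ ∈ Ω₁, IsLocalMax (fun x => v x - quadPoly A b c x) x₀) →
      0 ≤ sigmaMat k A := by
  intro A hA b c ⟨x₀, hx₀, hmax⟩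
  have hn : 0 < n := by omega
  have : Nonempty (Fin n) := ⟨⟨0, hn⟩⟩
  set U : ℕ → Euc n → ℝ := fun m => extendBy (u m) (0 : Euc n) (ε m) M with hU
  have hge : ∀ m, ∀ x ∈ Ω₁, -M ≤ U m x := by
    intro m x hx
    by_cases hb : x ∈ closedBall (0 : Euc n) (ε m)
    · exact (extendBy_in (u m) (ε m) M x hb).ge
    · simp only [hU, extendBy_out (u m) (ε m) M x hb]
      exact (underSol_ge k (ε m) M (hεm m).1 x hb).trans (hsub m x ⟨hx, hb⟩)
  have hcont : ∀ m, ContinuousOn (U m) Ω₁ := fun m =>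
    extendBy_cont Ω₁ (u m) (ε m) M (hu m).1.continuousOn (hu m).2.2.2
  have hlim : ∀ x ∈ Ω₁, x ≠ 0 → Tendsto (fun m => U m x) atTop (𝓝 (v x)) := by
    intro x hx h0
    refine (hC0 {x} ?_ isCompact_singleton).tendsto_at (mem_singleton x)
    rintro y rfl
    exact ⟨hx, h0⟩
  have hle : ∀ m, ∀ x ∈ Ω₁, x ≠ 0 → U m x ≤ v x := by
    intro m x hx h0
    exact (monotone_nat_of_le_succ (f := fun m => U m x) fun m => hmono m x hx).ge_of_tendsto
      (hlim x hx h0) m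
  have happ : ∀ δ > 0, ∀ N ∈ 𝓝 x₀, ∃ y ∈ N, y ∈ Ω₁ ∧ y ≠ 0 ∧ v x₀ - δ < v y := by
    intro δ hδ N hN
    by_cases h0 : x₀ = 0
    · subst h0
      have hΩ : ∀ᶠ y in 𝓝[≠] (0 : Euc n), y ∈ Ω₁ ∧ y ∈ N ∧ y ≠ 0 := by
        filter_upwards [nhdsWithin_le_nhds (hΩo.mem_nhds hx₀), nhdsWithin_le_nhds hN,
          self_mem_nhdsWithin] with y h1 h2 h3 using ⟨h1, h2, h3⟩
      have hb : IsBoundedUnder (· ≥ ·) (𝓝[≠] (0 : Euc n)) v := by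
        refine ⟨-M, ?_⟩
        rw [eventually_map]
        filter_upwards [hΩ] with y hy
        exact (hge 0 y hy.1).trans (hle 0 y hy.1 hy.2.2)
      have hfreq := frequently_lt_of_lt_limsup hb.isCoboundedUnder_le
        (show v 0 - δ < limsup v (𝓝[≠] (0 : Euc n)) by rw [← hv0]; linarith)
      obtain ⟨y, h1, h2⟩ := (hfreq.and_eventually hΩ).exists
      exact ⟨y, h2.2.1, h2.1, h2.2.2, h1⟩
    · exact ⟨x₀, mem_of_mem_nhds hN, hx₀, h0, by linarith⟩
  refine sigma_limit hA fun η hη => ?_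
  obtain ⟨ρ, hρ, hρs⟩ := Metric.mem_nhds_iff.1 (inter_mem (hΩo.mem_nhds hx₀) hmax)
  obtain ⟨r, hr, hrρ, hr0⟩ : ∃ r, 0 < r ∧ r < ρ ∧ r ≠ dist 0 x₀ := by
    by_cases h : ρ / 2 = dist 0 x₀
    · exact ⟨ρ / 3, by linarith, by linarith, by rw [← h]; intro h'; linarith⟩
    · exact ⟨ρ / 2, by linarith, by linarith, h⟩
  have hball : closedBall x₀ r ⊆ ball x₀ ρ := closedBall_subset_ball hrρ
  set q := quadPoly A b c with hq
  have hqc : Continuous q := quadPoly_cont A b c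
  have hFc : Continuous fun x => q x + η / 2 * ‖x - x₀‖ ^ 2 := by fun_prop
  obtain ⟨y, ⟨hyF, hyb⟩, hyΩ, hy0, hyv⟩ := happ (η * r ^ 2 / 4) (by positivity)
    ({y | q y + η / 2 * ‖y - x₀‖ ^ 2 < q x₀ + η * r ^ 2 / 4} ∩ ball x₀ r)
    (inter_mem ((isOpen_lt hFc continuous_const).mem_nhds (by
      have : 0 < η * r ^ 2 / 4 := by positivity
      simpa using this)) (ball_mem_nhds _ hr))
  simp only [mem_ofPred_eq] at hyF
  obtain ⟨m, hm⟩ : ∃ m, v x₀ - η * r ^ 2 / 4 < U m y :=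
    ((hlim y hyΩ hy0).eventually (lt_mem_nhds hyv)).exists
  obtain ⟨z, hz, hzmax⟩ := (isCompact_closedBall x₀ r).exists_isMaxOn
    ⟨y, ball_subset_closedBall hyb⟩
    (((hcont m).mono fun x hx => (hρs (hball hx)).1).sub hFc.continuousOn)
  have hzΩ : z ∈ Ω₁ := (hρs (hball hz)).1
  have hzy : U m y - (q y + η / 2 * ‖y - x₀‖ ^ 2) ≤ U m z - (q z + η / 2 * ‖z - x₀‖ ^ 2) :=
    hzmax (ball_subset_closedBall hyb)
  have hzb : z ∈ ball x₀ r := by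
    rw [mem_ball]
    refine lt_of_le_of_ne hz fun hzr => ?_
    have hz0 : z ≠ 0 := by rintro rfl; exact hr0 hzr.symm
    have h1 := hle m z hzΩ hz0
    have h2 : v z - q z ≤ v x₀ - q x₀ := (hρs (hball hz)).2
    rw [dist_eq_norm] at hzr
    rw [hzr] at hzy
    nlinarith
  have hloc : IsLocalMax (fun x => U m x - (q x + η / 2 * ‖x - x₀‖ ^ 2)) z :=
    hzmax.isLocalMax (mem_of_superset (isOpen_ball.mem_nhds hzb) ball_subset_closedBall)
  by_cases hzin : z ∈ closedBall (0 : Euc n) (ε m)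
  · have hUz : U m z = -M := extendBy_in (u m) (ε m) M z hzin
    have hloc' : IsLocalMax (fun x => (fun _ => -M) x - (q x + η / 2 * ‖x - x₀‖ ^ 2)) z := by
      filter_upwards [hloc, hΩo.mem_nhds hzΩ] with x h1 h2
      have := hge m x h2
      simp only [hUz] at h1 ⊢
      linarith
    refine esymmVec_nonneg _ (nonneg_eig hA η fun w => ?_)
    have := second_order A b c η z x₀ (fun _ => -M) contDiffAt_const hloc' w
    simpa using this
  · have hop : IsOpen (Ω₁ \ closedBall (0 : Euc n) (ε m)) := hΩo.sdiff isClosed_closedBall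
    have hzm : z ∈ Ω₁ \ closedBall (0 : Euc n) (ε m) := ⟨hzΩ, hzin⟩
    have hnh : Ω₁ \ closedBall (0 : Euc n) (ε m) ∈ 𝓝 z := hop.mem_nhds hzm
    have hnr : ringSet Ω₁ (0 : Euc n) (ε m) ∈ 𝓝 z := mem_of_superset hnh subset_closure
    have hloc' : IsLocalMax (fun x => u m x - (q x + η / 2 * ‖x - x₀‖ ^ 2)) z := by
      filter_upwards [hloc, hnh] with x h1 h2
      simp only [hU, extendBy_out (u m) (ε m) M x h2.2, extendBy_out (u m) (ε m) M z hzin] at h1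
      exact h1
    obtain ⟨⟨hH, hpos⟩, -⟩ := (hu m).2.1 z hzm
    refine (esymmVec_mono _ _ (weyl_le hH hA η fun w => ?_) hpos).le
    rw [qForm_hess _ _ _ hnr]
    exact second_order A b c η z x₀ (u m) ((hu m).1.contDiffAt hnr) hloc' w
end
end

section
/- Let 1 ≤ k ≤ n and C > 0. Define φ : ℝⁿ \ {0} → ℝ as follows: φ(x) = −C|x|^{2−n/k} if n > 2k; φ(x) = C log|x| if n = 2k; φ(x) = C|x|^{2−n/k} if n < 2k. Then in each case φ is smooth on ℝⁿ \ {0} and satisfies σ_k(D²φ(x)) = 0 for every x ≠ 0. -/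
open Set Metric Filter Topology Bornology
open scoped RealInnerProductSpace

noncomputable section

lemma aux_esymm_replicate (m j : ℕ) (a : ℝ) :
    (Multiset.replicate m a).esymm j = (m.choose j : ℝ) * a ^ j := by
  have h : Multiset.replicate m a = Multiset.map (fun _ : ℕ => a) (Finset.range m).val := by
    simp
  rw [h, Finset.esymm_map_val]
  rw [Finset.sum_congr rfl (g := fun _ => a ^ j)]
  · simp
  · intro s hs
    rw [Finset.mem_powersetCard] at hs
    simp [hs.2]

lemma aux_esymm_cons (s : Multiset ℝ) (c : ℝ) (j : ℕ) :
    (c ::ₘ s).esymm (j + 1) = s.esymm (j + 1) + c * s.esymm j := by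
  simp [Multiset.esymm, Multiset.powersetCard_cons, Multiset.map_map, Multiset.sum_map_mul_left]

lemma aux_sigma {n k : ℕ} (hk : 1 ≤ k) (hkn : k ≤ n) (A : Matrix (Fin n) (Fin n) ℝ)
    (a b : ℝ) (x : Fin n → ℝ) (hA : A = a • (1 : Matrix (Fin n) (Fin n) ℝ) + b • Matrix.vecMulVec x x)
    (hb : b * (x ⬝ᵥ x) = -((n : ℝ) / k) * a) : sigmaMat k A = 0 := by
  unfold sigmaMat
  split_ifs with h
  swap
  · rfl
  obtain ⟨m, rfl⟩ : ∃ m, n = m + 1 := ⟨n - 1, by omega⟩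
  obtain ⟨j, rfl⟩ : ∃ j, k = j + 1 := ⟨k - 1, by omega⟩
  have hch : A.charpoly = (Polynomial.X - Polynomial.C a) ^ m *
      (Polynomial.X - Polynomial.C (a + b * (x ⬝ᵥ x))) := by
    have e : A = Matrix.vecMulVec (b • x) x - Matrix.scalar (Fin (m+1)) (-a) := by
      rw [hA]
      ext i j
      by_cases hij : i = j
      · subst hij; simp [Matrix.vecMulVec_apply]; ring
      · simp [Matrix.vecMulVec_apply, hij]
    rw [e, Matrix.charpoly_sub_scalar, Matrix.charpoly_vecMulVec]
    simp [Polynomial.smul_eq_C_mul]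
    ring
  have hr := h.roots_charpoly_eq_eigenvalues
  have hr2 : A.charpoly.roots = (a + b * (x ⬝ᵥ x)) ::ₘ Multiset.replicate m a := by
    rw [hch, Polynomial.roots_mul, Polynomial.roots_pow, Polynomial.roots_X_sub_C,
      Polynomial.roots_X_sub_C, Multiset.nsmul_singleton, add_comm, Multiset.singleton_add]
    exact mul_ne_zero (pow_ne_zero _ (Polynomial.X_sub_C_ne_zero _)) (Polynomial.X_sub_C_ne_zero _)
  have he : esymmVec (j+1) h.eigenvalues
      = (Multiset.map h.eigenvalues Finset.univ.val).esymm (j+1) := by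
    rw [Finset.esymm_map_val]; rfl
  have hr3 : Multiset.map h.eigenvalues Finset.univ.val
      = (a + b * (x ⬝ᵥ x)) ::ₘ Multiset.replicate m a := by
    rw [← hr2, hr]; rfl
  rw [he, hr3, aux_esymm_cons, aux_esymm_replicate, aux_esymm_replicate, hb]
  have h1 : ((m+1).choose (j+1) : ℝ) * (j+1) = (m+1) * (m.choose j) := by
    exact_mod_cast (Nat.add_one_mul_choose_eq m j).symm
  rw [Nat.choose_succ_succ] at h1
  push_cast at h1 ⊢
  field_simp
  linear_combination (a^(j+1)) * h1

lemma aux_hess {n : ℕ} (φ : Euc n → ℝ) (c q : ℝ)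
    (hφ : ∀ y : Euc n, y ≠ 0 → HasFDerivAt φ ((c * (‖y‖^2) ^ q) • innerSL ℝ y) y)
    (x : Euc n) (hx : x ≠ 0) :
    hessian φ x = (c * (‖x‖^2) ^ q) • (1 : Matrix (Fin n) (Fin n) ℝ) +
      (c * (2 * q * (‖x‖^2) ^ (q - 1))) • Matrix.vecMulVec (x : Fin n → ℝ) x := by
  have hev : fderiv ℝ φ =ᶠ[𝓝 x] fun y => (c * (‖y‖^2) ^ q) • innerSL ℝ y := by
    filter_upwards [isOpen_ne.mem_nhds hx] with y hy using (hφ y hy).fderiv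
  have h1 : HasFDerivAt (fun y : Euc n => c * (‖y‖^2) ^ q) _ x :=
    ((hasStrictFDerivAt_norm_sq x).hasFDerivAt.rpow_const (p := q)
      (Or.inl (by simpa using hx))).const_mul c
  have h2 : HasFDerivAt (fun y : Euc n => (c * (‖y‖^2) ^ q) • innerSL ℝ y) _ x :=
    h1.smul (innerSL ℝ (E := Euc n)).hasFDerivAt
  ext i j
  have h4 : innerSL ℝ (EuclideanSpace.single i (1:ℝ)) (EuclideanSpace.single j (1:ℝ))
      = if i = j then (1:ℝ) else 0 := by
    rw [innerSL_apply_apply, EuclideanSpace.inner_single_left]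
    by_cases hij : i = j
    · subst hij; simp
    · simp [hij]
  have h3 : hessian φ x i j = _ := iteratedFDeriv_two_apply φ x _
  rw [h3, hev.fderiv_eq, h2.fderiv]
  simp [Matrix.vecMulVec_apply, Matrix.one_apply, EuclideanSpace.inner_single_right, PiLp.single_apply]
  erw [h4]
  split_ifs <;> ring

lemma aux_main {n k : ℕ} (hk : 1 ≤ k) (hkn : k ≤ n) (φ : Euc n → ℝ) (c : ℝ)
    (hφ : ∀ y : Euc n, y ≠ 0 →
      HasFDerivAt φ ((c * (‖y‖^2) ^ (-((n : ℝ) / k) / 2)) • innerSL ℝ y) y)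
    (x : Euc n) (hx : x ≠ 0) : sigmaMat k (hessian φ x) = 0 := by
  refine aux_sigma hk hkn _ _ _ _ (aux_hess φ c _ hφ x hx) ?_
  have hp : 0 < ‖x‖^2 := by have := norm_pos_iff.2 hx; positivity
  have : (x : Fin n → ℝ) ⬝ᵥ x = ‖x‖^2 := by
    rw [EuclideanSpace.norm_sq_eq]; simp [dotProduct, pow_two]
  rw [this, Real.rpow_sub_one hp.ne']
  field_simp

lemma aux_pow_fderiv {n : ℕ} (c p : ℝ) (y : Euc n) (hy : y ≠ 0) :
    HasFDerivAt (fun y : Euc n => c * ‖y‖ ^ p) ((c * p * (‖y‖^2) ^ ((p-2)/2)) • innerSL ℝ y) y := by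
  have h := ((hasStrictFDerivAt_norm_sq y).hasFDerivAt.rpow_const (p := p/2)
      (Or.inl (by simpa using hy))).const_mul c
  have e : (fun y : Euc n => c * ‖y‖ ^ p) = fun y : Euc n => c * (‖y‖^2) ^ (p/2) := by
    ext z
    rw [← Real.rpow_natCast, ← Real.rpow_mul (norm_nonneg _)]
    congr 2; push_cast; ring
  rw [e]
  refine h.congr_fderiv ?_
  have : (p-2)/2 = p/2 - 1 := by ring
  rw [this]
  ext z
  simp
  ring

lemma aux_log_fderiv {n : ℕ} (c : ℝ) (y : Euc n) (hy : y ≠ 0) :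
    HasFDerivAt (fun y : Euc n => c * Real.log ‖y‖) ((c * (‖y‖^2) ^ (-1:ℝ)) • innerSL ℝ y) y := by
  have h := ((hasStrictFDerivAt_norm_sq y).hasFDerivAt.log (by simpa using hy)).const_mul (c/2)
  have e : (fun y : Euc n => c * Real.log ‖y‖) = fun y : Euc n => c/2 * Real.log (‖y‖^2) := by
    ext z
    rw [Real.log_pow]; push_cast; ring
  rw [e]
  refine h.congr_fderiv ?_
  rw [Real.rpow_neg_one]
  ext z
  simp
  ring

lemma aux_pow_smooth {n : ℕ} (c p : ℝ) :
    ContDiffOn ℝ (⊤ : ℕ∞) (fun x : Euc n => c * ‖x‖ ^ p) {x : Euc n | x ≠ 0} := fun x hx =>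
  (contDiffAt_const.mul ((contDiffAt_norm ℝ hx).rpow_const_of_ne
    (norm_ne_zero_iff.2 hx))).contDiffWithinAt

lemma aux_log_smooth {n : ℕ} (c : ℝ) :
    ContDiffOn ℝ (⊤ : ℕ∞) (fun x : Euc n => c * Real.log ‖x‖) {x : Euc n | x ≠ 0} := fun x hx =>
  (contDiffAt_const.mul ((contDiffAt_norm ℝ hx).log
    (norm_ne_zero_iff.2 hx))).contDiffWithinAt

lemma aux_pow_sigma {n k : ℕ} (hk : 1 ≤ k) (hkn : k ≤ n) (c : ℝ) (x : Euc n) (hx : x ≠ 0) :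
    sigmaMat k (hessian (fun y : Euc n => c * ‖y‖ ^ ((2:ℝ) - (n : ℝ)/(k : ℝ))) x) = 0 := by
  refine aux_main hk hkn _ (c * (2 - (n : ℝ)/k)) (fun y hy => ?_) x hx
  have := aux_pow_fderiv c ((2:ℝ) - (n : ℝ)/(k : ℝ)) y hy
  rwa [show ((2:ℝ) - (n : ℝ)/(k : ℝ) - 2)/2 = -((n : ℝ) / k) / 2 by ring] at this

/-- the radial functions `−C|x|^{2−n/k}`, `C log|x|`, `C|x|^{2−n/k}`
are smooth away from the origin and solve `σ_k(D²φ) = 0` there. -/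
theorem statement18 {n k : ℕ} (hk : 1 ≤ k) (hkn : k ≤ n) (C : ℝ) (hC : 0 < C) :
    (2 * k < n →
      ContDiffOn ℝ (⊤ : ℕ∞)
        (fun x : Euc n => -C * ‖x‖ ^ ((2:ℝ) - (n : ℝ)/(k : ℝ))) {x : Euc n | x ≠ 0} ∧
      ∀ x : Euc n, x ≠ 0 →
        sigmaMat k (hessian (fun y : Euc n => -C * ‖y‖ ^ ((2:ℝ) - (n : ℝ)/(k : ℝ))) x) = 0) ∧
    (n = 2 * k →
      ContDiffOn ℝ (⊤ : ℕ∞)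
        (fun x : Euc n => C * Real.log ‖x‖) {x : Euc n | x ≠ 0} ∧
      ∀ x : Euc n, x ≠ 0 →
        sigmaMat k (hessian (fun y : Euc n => C * Real.log ‖y‖) x) = 0) ∧
    (n < 2 * k →
      ContDiffOn ℝ (⊤ : ℕ∞)
        (fun x : Euc n => C * ‖x‖ ^ ((2:ℝ) - (n : ℝ)/(k : ℝ))) {x : Euc n | x ≠ 0} ∧
      ∀ x : Euc n, x ≠ 0 →
        sigmaMat k (hessian (fun y : Euc n => C * ‖y‖ ^ ((2:ℝ) - (n : ℝ)/(k : ℝ))) x) = 0) := by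
  refine ⟨fun _ => ⟨aux_pow_smooth _ _, aux_pow_sigma hk hkn _⟩,
    fun h => ⟨aux_log_smooth _, fun x hx => ?_⟩,
    fun _ => ⟨aux_pow_smooth _ _, aux_pow_sigma hk hkn _⟩⟩
  refine aux_main hk hkn _ C (fun y hy => ?_) x hx
  have := aux_log_fderiv C y hy
  have hk0 : (k : ℝ) ≠ 0 := by positivity
  have e : -((n : ℝ) / k) / 2 = -1 := by
    rw [h]; push_cast; field_simp
  rwa [e]
end
end
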